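/- Let q be a prime power, r ≥ 1, and let t ≥ 2 be an integer. Let f(X) = ∑_{i=0}^{M} A_i X^{q^{k_i}} ∈ F_{q^r}[X] with 0 = k_0 < k_1 < ⋯ < k_M, A_i ≠ 0 for all i, A_M = 1, k_i ≠ t for all i, and k_i ≥ t for all i ≥ 2. Suppose either t divides k_M and k_M ≥ 3t, or t does not divide k_M and k_M ≥ 2t − 1. Then the polynomial C(X,Y) = (f(X)·Y^{q^t} − f(Y)·X^{q^t})/(X^q·Y − X·Y^q) ∈ F_{q^r}[X,Y] has an irreducible factor g ∈ F_{q^r}[X,Y] which remains irreducible in K[X,Y], where K is an algebraic closure of F_{q^r}; that is, the curve C_f has an absolutely irreducible component defined over F_{q^r}. -/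

import Mathlib

/-- Package of a discretely valued field `k ⊇ K` together with a Galois-invariant extension of its
absolute value to an algebraically closed field `Ω`. -/
structure LV (K k Ω : Type) [Field K] [Field k] [Field Ω] [Algebra K k] [Algebra k Ω]
    [Algebra K Ω] where
  v : AbsoluteValue Ω ℝ
  ultra : ∀ x y, v (x + y) ≤ max (v x) (v y)
  triv : ∀ c : K, c ≠ 0 → v (algebraMap K Ω c) = 1
  T : k
  T_ne : T ≠ 0
  T_lt : v (algebraMap k Ω T) < 1
  disc : ∀ a : k, a ≠ 0 → ∃ j : ℤ, v (algebraMap k Ω a) = v (algebraMap k Ω T) ^ j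
  conj : ∀ y y' : Ω, minpoly k y = minpoly k y' → v y = v y'

open LaurentSeries in
theorem exists_LV (K : Type) [Field K] :
    Nonempty (LV K (LaurentSeries K) (AlgebraicClosure (LaurentSeries K))) := by
  classical
  have hT1 : Valued.v (HahnSeries.single (1 : ℤ) (1 : K) : LaurentSeries K) < 1 := by
    rw [valuation_single_zpow]; rw [← WithZero.exp_zero, WithZero.exp_lt_exp]; norm_num
  have hT0 : (HahnSeries.single (1 : ℤ) (1 : K) : LaurentSeries K) ≠ 0 := by
    simp
  have hnt : (Valued.v : Valuation (LaurentSeries K) _).IsNontrivial := by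
    constructor
    exact ⟨_, by simpa using hT0, ne_of_lt hT1⟩
  have hma : MulArchimedean (MonoidWithZeroHom.ValueGroup₀
      (.ofClass (Valued.v : Valuation (LaurentSeries K) _))) := by
    refine MulArchimedean.comap (MonoidWithZeroHom.ValueGroup₀.embedding).toMonoidHom
      MonoidWithZeroHom.ValueGroup₀.embedding_strictMono
  obtain ⟨hR⟩ := Valuation.nonempty_rankOne_iff_mulArchimedean.2 hma
  letI : NontriviallyNormedField (LaurentSeries K) := Valued.toNontriviallyNormedField _ (WithZero (Multiplicative ℤ))
  haveI : IsUltrametricDist (LaurentSeries K) := Valued.instIsUltrametricDist _ _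
  haveI : CompleteSpace (LaurentSeries K) := LaurentSeries.instLaurentSeriesComplete
  have hext : ∀ a : LaurentSeries K, spectralMulAlgNorm (LaurentSeries K) (AlgebraicClosure (LaurentSeries K))
      (algebraMap _ _ a) = ‖a‖ := fun a => spectralNorm_extends a
  have hval : ∀ a b : LaurentSeries K, Valued.v a = Valued.v b → ‖a‖ = ‖b‖ := by
    intro a b h
    exact le_antisymm (Valued.toNormedField.norm_le_iff.2 h.le) (Valued.toNormedField.norm_le_iff.2 h.ge)
  refine ⟨{ v := ⟨⟨spectralMulAlgNorm (LaurentSeries K) (AlgebraicClosure (LaurentSeries K)), map_mul _⟩,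
              fun x => apply_nonneg _ x, fun x => map_eq_zero_iff_eq_zero _, fun x y => map_add_le_add _ x y⟩
            ultra := ?_, triv := ?_, T := HahnSeries.single 1 1, T_ne := hT0, T_lt := ?_, disc := ?_
            conj := ?_ }⟩
  · intro x y
    exact isNonarchimedean_spectralNorm x y
  · intro c hc
    change spectralMulAlgNorm (LaurentSeries K) (AlgebraicClosure (LaurentSeries K)) _ = 1
    rw [IsScalarTower.algebraMap_apply K (LaurentSeries K), hext]
    have h1 : ∀ c : K, ‖algebraMap K (LaurentSeries K) c‖ ≤ 1 := by
      intro c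
      rw [Valued.toNormedField.norm_le_one_iff, LaurentSeries.val_le_one_iff_eq_coe]
      exact ⟨PowerSeries.C c, by simp [HahnSeries.algebraMap_apply']⟩
    refine le_antisymm (h1 c) ?_
    have := h1 c⁻¹
    rw [map_inv₀, norm_inv] at this
    have h2 : 0 < ‖algebraMap K (LaurentSeries K) c‖ := by
      rw [norm_pos_iff]; simpa using hc
    exact (inv_le_one₀ h2).1 this
  · change spectralMulAlgNorm (LaurentSeries K) (AlgebraicClosure (LaurentSeries K)) _ < 1
    rw [hext, Valued.toNormedField.norm_lt_one_iff]
    exact hT1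
  · intro a ha
    change ∃ j : ℤ, spectralMulAlgNorm (LaurentSeries K) (AlgebraicClosure (LaurentSeries K)) _ =
      (spectralMulAlgNorm (LaurentSeries K) (AlgebraicClosure (LaurentSeries K)) _) ^ j
    rw [hext, hext]
    have hva : Valued.v a ≠ 0 := by simpa using ha
    refine ⟨-WithZero.log (Valued.v a), ?_⟩
    rw [← norm_zpow]
    apply hval
    rw [map_zpow₀, valuation_single_zpow, ← WithZero.exp_zsmul]
    simp [WithZero.exp_log hva]
  · intro y y' h
    change spectralNorm _ _ y = spectralNorm _ _ y'
    rw [spectralNorm, spectralNorm, h]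

section LVbasic

variable {K k Ω : Type} [Field K] [Field k] [Field Ω] [Algebra K k] [Algebra k Ω] [Algebra K Ω]

namespace LV

variable (L : LV K k Ω)

theorem v_pos {y : Ω} (h : y ≠ 0) : 0 < L.v y := L.v.pos h

theorem v_neg (y : Ω) : L.v (-y) = L.v y := L.v.map_neg y

theorem v_sub_le (y z : Ω) : L.v (y - z) ≤ max (L.v y) (L.v z) := by
  have := L.ultra y (-z)
  rwa [← sub_eq_add_neg, L.v_neg] at this

theorem v_add_lt {y z : Ω} {r : ℝ} (h1 : L.v y < r) (h2 : L.v z < r) : L.v (y + z) < r :=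
  (L.ultra y z).trans_lt (max_lt h1 h2)

theorem v_add_le {y z : Ω} {r : ℝ} (h1 : L.v y ≤ r) (h2 : L.v z ≤ r) : L.v (y + z) ≤ r :=
  (L.ultra y z).trans (max_le h1 h2)

theorem v_sub_lt {y z : Ω} {r : ℝ} (h1 : L.v y < r) (h2 : L.v z < r) : L.v (y - z) < r :=
  (L.v_sub_le y z).trans_lt (max_lt h1 h2)

theorem v_sub_le' {y z : Ω} {r : ℝ} (h1 : L.v y ≤ r) (h2 : L.v z ≤ r) : L.v (y - z) ≤ r :=
  (L.v_sub_le y z).trans (max_le h1 h2)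

theorem v_add_eq {y z : Ω} (h : L.v z < L.v y) : L.v (y + z) = L.v y := by
  refine le_antisymm (L.v_add_le le_rfl h.le) ?_
  by_contra! h'
  have := L.v_sub_lt h' h
  simp at this

theorem v_sub_eq {y z : Ω} (h : L.v z < L.v y) : L.v (y - z) = L.v y := by
  rw [sub_eq_add_neg]; exact L.v_add_eq (by rwa [L.v_neg])

/-- if `y` and `z` are closer than the size of `y` they have the same size. -/
theorem v_eq_of_sub_lt {y z : Ω} (h : L.v (y - z) < L.v y) : L.v z = L.v y := by
  have := L.v_sub_eq h
  simpa using this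

theorem v_sum_le {ι : Type*} (s : Finset ι) (g : ι → Ω) {r : ℝ} (hr : 0 ≤ r)
    (h : ∀ i ∈ s, L.v (g i) ≤ r) : L.v (∑ i ∈ s, g i) ≤ r := by
  classical
  induction s using Finset.induction_on with
  | empty => simpa using hr
  | insert a s ha ih =>
    rw [Finset.sum_insert ha]
    exact L.v_add_le (h a (by simp)) (ih fun i hi => h i (by simp [hi]))

theorem v_sum_lt {ι : Type*} (s : Finset ι) (g : ι → Ω) {r : ℝ} (hr : 0 < r)
    (h : ∀ i ∈ s, L.v (g i) < r) : L.v (∑ i ∈ s, g i) < r := by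
  classical
  induction s using Finset.induction_on with
  | empty => simpa using hr
  | insert a s ha ih =>
    rw [Finset.sum_insert ha]
    exact L.v_add_lt (h a (by simp)) (ih fun i hi => h i (by simp [hi]))

theorem v_const_le (c : K) : L.v (algebraMap K Ω c) ≤ 1 := by
  by_cases h : c = 0
  · simp [h]
  · exact (L.triv c h).le

theorem v_const_mul_le (c : K) (y : Ω) : L.v (algebraMap K Ω c * y) ≤ L.v y := by
  rw [map_mul]
  calc _ ≤ 1 * L.v y := by gcongr; exact L.v_const_le c
    _ = _ := one_mul _

theorem const_eq_of_lt {c d : K} (h : L.v (algebraMap K Ω c - algebraMap K Ω d) < 1) : c = d := by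
  by_contra hne
  rw [← map_sub, L.triv _ (sub_ne_zero.2 hne)] at h
  exact lt_irrefl _ h

/-- additive normalised valuation -/
noncomputable def o (y : Ω) : ℝ := Real.log (L.v y) / Real.log (L.v (algebraMap k Ω L.T))

theorem vT_pos : 0 < L.v (algebraMap k Ω L.T) := L.v_pos (by simpa using L.T_ne)

theorem logT_neg : Real.log (L.v (algebraMap k Ω L.T)) < 0 := Real.log_neg L.vT_pos L.T_lt

theorem o_mul {y z : Ω} (hy : y ≠ 0) (hz : z ≠ 0) : L.o (y * z) = L.o y + L.o z := by
  unfold o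
  rw [map_mul, Real.log_mul (L.v_pos hy).ne' (L.v_pos hz).ne', add_div]

theorem o_pow (y : Ω) (n : ℕ) : L.o (y ^ n) = n * L.o y := by
  unfold o
  rw [map_pow, Real.log_pow, mul_div_assoc]

theorem o_inv (y : Ω) : L.o (y⁻¹) = - L.o y := by
  unfold o
  rw [map_inv₀, Real.log_inv, neg_div]

theorem o_zpow (y : Ω) (n : ℤ) : L.o (y ^ n) = n * L.o y := by
  unfold o
  rw [map_zpow₀, Real.log_zpow, mul_div_assoc]

theorem o_prod {ι : Type*} (s : Finset ι) (g : ι → Ω) (h : ∀ i ∈ s, g i ≠ 0) :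
    L.o (∏ i ∈ s, g i) = ∑ i ∈ s, L.o (g i) := by
  unfold o
  rw [map_prod, Real.log_prod (fun i hi => (L.v_pos (h i hi)).ne'), Finset.sum_div]

theorem o_T : L.o (algebraMap k Ω L.T) = 1 := div_self L.logT_neg.ne

theorem o_congr {y z : Ω} (h : L.v y = L.v z) : L.o y = L.o z := by simp [o, h]

theorem v_eq_of_o {y z : Ω} (hy : y ≠ 0) (hz : z ≠ 0) (h : L.o y = L.o z) : L.v y = L.v z := by
  unfold o at h
  rw [div_left_inj' L.logT_neg.ne] at h
  exact Real.log_injOn_pos (L.v_pos hy) (L.v_pos hz) h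

theorem o_le_iff {y z : Ω} (hy : y ≠ 0) (hz : z ≠ 0) : L.o y ≤ L.o z ↔ L.v z ≤ L.v y := by
  unfold o
  rw [div_le_div_right_of_neg L.logT_neg, Real.log_le_log_iff (L.v_pos hz) (L.v_pos hy)]

theorem o_lt_iff {y z : Ω} (hy : y ≠ 0) (hz : z ≠ 0) : L.o y < L.o z ↔ L.v z < L.v y := by
  rw [← not_le, L.o_le_iff hz hy, not_le]

theorem o_const (c : K) : L.o (algebraMap K Ω c) = 0 := by
  by_cases h : c = 0
  · simp [h, o]
  · simp [o, L.triv c h]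

theorem o_neg (y : Ω) : L.o (-y) = L.o y := L.o_congr (L.v_neg y)

theorem o_base (a : k) : ∃ j : ℤ, L.o (algebraMap k Ω a) = j := by
  by_cases h : a = 0
  · exact ⟨0, by simp [o, h]⟩
  obtain ⟨j, hj⟩ := L.disc a h
  refine ⟨j, ?_⟩
  unfold o
  rw [hj, Real.log_zpow, mul_div_assoc, div_self L.logT_neg.ne, mul_one]

section galois
variable [IsAlgClosed Ω] [Algebra.IsAlgebraic k Ω]

theorem v_sigma (σ : Ω ≃ₐ[k] Ω) (y : Ω) : L.v (σ y) = L.v y :=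
  L.conj _ _ (minpoly.algEquiv_eq σ y)

theorem normal' : Normal k Ω := by
  haveI : IsAlgClosure k Ω := ⟨inferInstance, inferInstance⟩
  exact IsAlgClosure.normal k Ω

theorem exists_sigma {y y' : Ω} (h : Polynomial.aeval y' (minpoly k y) = 0) :
    ∃ σ : Ω ≃ₐ[k] Ω, σ y = y' := by
  haveI : Normal k Ω := normal'
  have hy : IsIntegral k y := Algebra.IsIntegral.isIntegral y
  have : minpoly k y = minpoly k y' :=
    minpoly.eq_of_irreducible_of_monic (minpoly.irreducible hy) h (minpoly.monic hy)
  exact isConjRoot_iff_exists_algEquiv.1 (isConjRoot_def.2 this.symm)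

theorem o_mul_deg (y : Ω) : ∃ j : ℤ, L.o y * (minpoly k y).natDegree = j := by
  by_cases hy0 : y = 0
  · exact ⟨0, by simp [hy0, o]⟩
  have hy : IsIntegral k y := Algebra.IsIntegral.isIntegral y
  have hs : ((minpoly k y).map (algebraMap k Ω)).Splits := IsAlgClosed.splits _
  have hm : ((minpoly k y).map (algebraMap k Ω)).Monic := (minpoly.monic hy).map _
  have h0 := hs.coeff_zero_eq_prod_roots_of_monic hm
  have hr : ∀ z ∈ ((minpoly k y).map (algebraMap k Ω)).roots, L.v z = L.v y := by
    intro z hz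
    have hz' := (Polynomial.mem_roots'.1 hz).2
    rw [Polynomial.IsRoot.def, Polynomial.eval_map_algebraMap] at hz'
    obtain ⟨σ, rfl⟩ := exists_sigma hz'
    exact L.v_sigma σ y
  have hv : L.v ((minpoly k y).map (algebraMap k Ω)).roots.prod
      = L.v y ^ (minpoly k y).natDegree := by
    rw [map_multiset_prod, Multiset.map_congr rfl hr, Multiset.map_const', Multiset.prod_replicate,
      ← hs.natDegree_eq_card_roots, Polynomial.natDegree_map]
  obtain ⟨j, hj⟩ := L.o_base ((minpoly k y).coeff 0)
  refine ⟨j, ?_⟩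
  rw [← hj]
  rw [Polynomial.coeff_map] at h0
  rw [h0]
  have : L.v ((-1) ^ ((minpoly k y).map (algebraMap k Ω)).natDegree *
      ((minpoly k y).map (algebraMap k Ω)).roots.prod) = L.v (y ^ (minpoly k y).natDegree) := by
    rw [map_mul, hv, map_pow, map_pow, L.v_neg, map_one, one_pow, one_mul]
  rw [L.o_congr this, L.o_pow, mul_comm]

end galois

theorem exists_residue [IsAlgClosed K] {n : ℕ} (hn : 2 ≤ n) (a : K) (ρ : Ω)
    (h : L.v (ρ ^ n - algebraMap K Ω a * ρ) < 1) :
    ∃ c : K, c ^ n = a * c ∧ L.v (ρ - algebraMap K Ω c) < 1 := by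
  classical
  set G : Polynomial K := Polynomial.X ^ n - Polynomial.C a * Polynomial.X with hG
  have hdeg : (Polynomial.C a * Polynomial.X : Polynomial K).degree < n := by
    refine lt_of_le_of_lt (Polynomial.degree_C_mul_X_le a) ?_
    exact_mod_cast hn
  have hm : G.Monic := Polynomial.monic_X_pow_sub (by
    refine (Polynomial.degree_C_mul_X_le a).trans_lt ?_
    exact_mod_cast hn)
  have hs : G.Splits := IsAlgClosed.splits G
  have he := hs.eq_prod_roots
  rw [hm.leadingCoeff, Polynomial.C_1, one_mul] at he
  have h1 : Polynomial.aeval ρ G = (G.roots.map fun c => ρ - algebraMap K Ω c).prod := by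
    conv_lhs => rw [he]
    rw [map_multiset_prod, Multiset.map_map]
    simp
  have h2 : Polynomial.aeval ρ G = ρ ^ n - algebraMap K Ω a * ρ := by simp [hG]
  rw [← h2, h1] at h
  by_contra! hcon
  have : ∀ c ∈ G.roots, 1 ≤ L.v (ρ - algebraMap K Ω c) := by
    intro c hc
    refine hcon c ?_
    have := (Polynomial.mem_roots'.1 hc).2
    simpa [hG, sub_eq_zero] using this
  rw [map_multiset_prod, Multiset.map_map] at h
  refine absurd h (not_lt.2 ?_)
  refine Multiset.prod_induction (fun r : ℝ => 1 ≤ r) _ (fun a b ha hb => one_le_mul_of_one_le_of_one_le ha hb)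
    le_rfl ?_
  intro r hr
  obtain ⟨c, hc, rfl⟩ := Multiset.mem_map.1 hr
  exact this c hc

end LV

end LVbasic

/-- numerical and coefficient data -/
structure Dat (K : Type) [Field K] where
  p : ℕ
  e : ℕ
  q : ℕ
  t : ℕ
  k : ℕ
  hp : p.Prime
  char : CharP K p
  he : 0 < e
  hq : q = p ^ e
  ht : 2 ≤ t
  htk : t < k
  c : ℕ → K
  c0 : c 0 ≠ 0
  ck : c k = 1
  i : ℕ
  hi0 : 0 < i
  hit : i < t
  hci : ∀ j, 0 < j → j < t → j ≠ i → c j = 0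

namespace Dat
variable {K : Type} [Field K] (D : Dat K)

theorem two_le_q : 2 ≤ D.q := by
  rw [D.hq]
  calc 2 ≤ D.p := D.hp.two_le
    _ = D.p ^ 1 := (pow_one _).symm
    _ ≤ D.p ^ D.e := Nat.pow_le_pow_right D.hp.pos D.he

theorem q_pos : 0 < D.q := lt_of_lt_of_le (by norm_num) D.two_le_q

theorem charP (L : Type) [Field L] [Algebra K L] : CharP L D.p := by
  haveI := D.char
  exact charP_of_injective_algebraMap (algebraMap K L).injective D.p

section
variable {L : Type} [Field L] [Algebra K L]

theorem add_pow_q (j : ℕ) (x y : L) : (x + y) ^ (D.q ^ j) = x ^ (D.q ^ j) + y ^ (D.q ^ j) := by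
  haveI := D.charP L
  haveI := Fact.mk D.hp
  rw [D.hq, ← pow_mul]
  exact add_pow_char_pow x y _ _

theorem sub_pow_q (j : ℕ) (x y : L) : (x - y) ^ (D.q ^ j) = x ^ (D.q ^ j) - y ^ (D.q ^ j) := by
  haveI := D.charP L
  haveI := Fact.mk D.hp
  rw [D.hq, ← pow_mul]
  exact sub_pow_char_pow x y _

/-- the `q`-polynomial as a function -/
noncomputable def f (y : L) : L := ∑ j ∈ Finset.range (D.k + 1), algebraMap K L (D.c j) * y ^ (D.q ^ j)

theorem f_add (x y : L) : D.f (x + y) = D.f x + D.f y := by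
  unfold f
  rw [← Finset.sum_add_distrib]
  exact Finset.sum_congr rfl fun j _ => by rw [D.add_pow_q]; ring

theorem f_sub (x y : L) : D.f (x - y) = D.f x - D.f y := by
  unfold f
  rw [← Finset.sum_sub_distrib]
  exact Finset.sum_congr rfl fun j _ => by rw [D.sub_pow_q]; ring

theorem qpow_ne (j : ℕ) : D.q ^ j ≠ 0 := pow_ne_zero _ D.q_pos.ne'

theorem qpow_pos (j : ℕ) : 0 < D.q ^ j := pow_pos D.q_pos _

theorem qpow_lt {i j : ℕ} (h : i < j) : D.q ^ i < D.q ^ j := Nat.pow_lt_pow_right D.two_le_q h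

theorem qpow_le {i j : ℕ} (h : i ≤ j) : D.q ^ i ≤ D.q ^ j := Nat.pow_le_pow_right D.q_pos h

theorem f_zero : D.f (0 : L) = 0 := by
  unfold f
  exact Finset.sum_eq_zero fun j _ => by rw [zero_pow (D.qpow_ne j), mul_zero]

end

section
variable {k Ω : Type} [Field k] [Field Ω] [Algebra K k] [Algebra k Ω] [Algebra K Ω] (L : LV K k Ω)

theorem f_small {y : Ω} (h : L.v y < 1) : L.v (D.f y) = L.v y := by
  by_cases hy : y = 0
  · subst hy; rw [D.f_zero]
  have hpos := L.v_pos hy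
  unfold f
  rw [Finset.sum_range_succ', add_comm, L.v_add_eq]
  · rw [pow_zero, pow_one, map_mul, L.triv _ D.c0, one_mul]
  · rw [pow_zero, pow_one, map_mul, L.triv _ D.c0, one_mul]
    refine L.v_sum_lt _ _ hpos fun j _ => ?_
    refine (L.v_const_mul_le _ _).trans_lt ?_
    rw [map_pow]
    refine pow_lt_self_of_lt_one₀ hpos h ?_
    calc 1 < D.q := D.two_le_q
      _ = D.q ^ 1 := (pow_one _).symm
      _ ≤ _ := D.qpow_le (by omega)

theorem f_large {y : Ω} (h : 1 < L.v y) : L.v (D.f y) = L.v y ^ (D.q ^ D.k) := by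
  unfold f
  rw [Finset.sum_range_succ, add_comm, D.ck, map_one, one_mul, L.v_add_eq, map_pow]
  rw [map_pow]
  refine L.v_sum_lt _ _ (by positivity) fun j hj => ?_
  refine (L.v_const_mul_le _ _).trans_lt ?_
  rw [map_pow]
  exact pow_lt_pow_right₀ h (D.qpow_lt (Finset.mem_range.1 hj))

theorem f_unit {y : Ω} (h : L.v y ≤ 1) : L.v (D.f y) ≤ 1 := by
  unfold f
  refine L.v_sum_le _ _ zero_le_one fun j hj => ?_
  refine (L.v_const_mul_le _ _).trans ?_
  rw [map_pow]
  exact pow_le_one₀ (L.v.nonneg y) h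

end

end Dat

/-- local data at a place -/
structure Pl {K : Type} [Field K] (D : Dat K) {k Ω : Type} [Field k] [Field Ω] [Algebra K k]
    [Algebra k Ω] [Algebra K Ω] (L : LV K k Ω) where
  x : k
  x_ne : x ≠ 0
  V : Finset Ω
  S : Finset Ω
  S' : Finset Ω
  line : Finset Ω
  memV : ∀ y, y ∈ V ↔ D.f y * (algebraMap k Ω x) ^ (D.q ^ D.t) = D.f (algebraMap k Ω x) * y ^ (D.q ^ D.t)
  memL : ∀ y, y ∈ line ↔ ∃ c : K, c ^ D.q = c ∧ y = algebraMap K Ω c * algebraMap k Ω x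
  cover : ∀ y, y ∈ V ↔ y ∈ S ∨ y ∈ S' ∨ y ∈ line
  dSS' : ∀ y, y ∈ S → y ∉ S'
  dSL : ∀ y, y ∈ S → y ∉ line
  dSL' : ∀ y, y ∈ S' → y ∉ line
  cardV : V.card = D.q ^ D.k
  cardL : line.card = D.q
  prodV : ∑ y ∈ V, L.o y = 0
  conjS : ∀ (σ : Ω ≃ₐ[k] Ω) (y : Ω), y ∈ S → σ y ∈ S
  conjS' : ∀ (σ : Ω ≃ₐ[k] Ω) (y : Ω), y ∈ S' → σ y ∈ S'
  sep : ∀ y ∈ V, (minpoly k y).Separable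
  prodS : ∀ b : k, ∃ d : k, ∏ y ∈ S, (algebraMap k Ω b - y) = algebraMap k Ω d
  prodS' : ∀ b : k, ∃ d : k, ∏ y ∈ S', (algebraMap k Ω b - y) = algebraMap k Ω d

namespace Pl
variable {K : Type} [Field K] {D : Dat K} {k Ω : Type} [Field k] [Field Ω] [Algebra K k]
    [Algebra k Ω] [Algebra K Ω] {L : LV K k Ω}

/-- exchange the two factors -/
def swap (G : Pl D L) : Pl D L where
  x := G.x
  x_ne := G.x_ne
  V := G.V
  S := G.S'
  S' := G.S
  line := G.line
  memV := G.memV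
  memL := G.memL
  cover := fun y => by rw [G.cover]; tauto
  dSS' := fun y h h' => G.dSS' y h' h
  dSL := G.dSL'
  dSL' := G.dSL
  cardV := G.cardV
  cardL := G.cardL
  prodV := G.prodV
  conjS := G.conjS'
  conjS' := G.conjS
  sep := G.sep
  prodS := G.prodS'
  prodS' := G.prodS

variable (G : Pl D L)

/-- image of `x` in `Ω` -/
def X : Ω := algebraMap k Ω G.x

theorem X_ne : G.X ≠ 0 := by simpa [X] using G.x_ne

theorem mem_iff (y : Ω) : y ∈ G.V ↔ D.f y * G.X ^ (D.q ^ D.t) = D.f G.X * y ^ (D.q ^ D.t) := G.memV y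

theorem V_zero : (0 : Ω) ∈ G.V := by
  rw [mem_iff, D.f_zero, zero_pow (D.qpow_ne _)]; simp

theorem V_sub {y z : Ω} (hy : y ∈ G.V) (hz : z ∈ G.V) : y - z ∈ G.V := by
  rw [mem_iff] at *
  rw [D.f_sub, D.sub_pow_q, sub_mul, hy, hz, mul_sub]

theorem V_add {y z : Ω} (hy : y ∈ G.V) (hz : z ∈ G.V) : y + z ∈ G.V := by
  rw [mem_iff] at *
  rw [D.f_add, D.add_pow_q, add_mul, hy, hz, mul_add]

theorem V_S {y : Ω} (hy : y ∈ G.S) : y ∈ G.V := (G.cover y).2 (Or.inl hy)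
theorem V_S' {y : Ω} (hy : y ∈ G.S') : y ∈ G.V := (G.cover y).2 (Or.inr (Or.inl hy))
theorem V_line {y : Ω} (hy : y ∈ G.line) : y ∈ G.V := (G.cover y).2 (Or.inr (Or.inr hy))

theorem f_eq {y : Ω} (hy : y ∈ G.V) :
    L.v (D.f y) * L.v G.X ^ (D.q ^ D.t) = L.v (D.f G.X) * L.v y ^ (D.q ^ D.t) := by
  rw [mem_iff] at hy
  have := congrArg L.v hy
  simpa only [map_mul, map_pow] using this

theorem qr_lt : (D.q : ℝ) ^ D.t < (D.q : ℝ) ^ D.k := by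
  exact_mod_cast D.qpow_lt D.htk

theorem one_lt_qt : (1 : ℝ) < (D.q : ℝ) ^ D.t := by
  have := D.qpow_lt (show 0 < D.t by have := D.ht; omega)
  rw [pow_zero] at this
  exact_mod_cast this

theorem log_eq {y X : Ω} {a b c d : ℕ} (hy : y ≠ 0) (hX : X ≠ 0)
    (h : L.v y ^ a * L.v X ^ b = L.v X ^ c * L.v y ^ d) :
    a * L.o y + b * L.o X = c * L.o X + d * L.o y := by
  rw [← map_pow, ← map_pow, ← map_pow, ← map_pow, ← map_mul, ← map_mul] at h
  have := L.o_congr h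
  rwa [L.o_mul (pow_ne_zero _ hy) (pow_ne_zero _ hX), L.o_mul (pow_ne_zero _ hX) (pow_ne_zero _ hy),
    L.o_pow, L.o_pow, L.o_pow, L.o_pow] at this

theorem dich0 (hX : L.v G.X < 1) {y : Ω} (hy : y ∈ G.V) (hy0 : y ≠ 0) :
    L.v y = L.v G.X ∨ (1 < L.v y ∧
      L.o y * ((D.q : ℝ) ^ D.k - (D.q : ℝ) ^ D.t) = - ((D.q : ℝ) ^ D.t - 1) * L.o G.X) := by
  have h := G.f_eq hy
  rw [D.f_small L hX] at h
  have hXp := L.v_pos G.X_ne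
  rcases lt_trichotomy (L.v y) 1 with h1 | h1 | h1
  · left
    rw [D.f_small L h1] at h
    have := log_eq (a := 1) (c := 1) hy0 G.X_ne (by simpa using h)
    push_cast at this
    refine L.v_eq_of_o hy0 G.X_ne ?_
    have h2 : ((D.q : ℝ) ^ D.t - 1) * (L.o y - L.o G.X) = 0 := by linarith
    rcases mul_eq_zero.1 h2 with h3 | h3
    · have := one_lt_qt (D := D); linarith
    · linarith
  · exfalso
    have h2 := D.f_unit L h1.le
    rw [h1, one_pow, mul_one] at h
    have h3 : L.v G.X ^ (D.q ^ D.t) < L.v G.X := by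
      refine pow_lt_self_of_lt_one₀ hXp hX ?_
      have := one_lt_qt (D := D)
      exact_mod_cast this
    have : L.v (D.f y) * L.v G.X ^ (D.q ^ D.t) ≤ 1 * L.v G.X ^ (D.q ^ D.t) := by gcongr
    linarith
  · right
    refine ⟨h1, ?_⟩
    rw [D.f_large L h1] at h
    have := log_eq (c := 1) hy0 G.X_ne (by simpa using h)
    push_cast at this
    linarith

theorem dichI (hX : 1 < L.v G.X) {y : Ω} (hy : y ∈ G.V) (hy0 : y ≠ 0) :
    L.v y = L.v G.X ∨ (L.v y < 1 ∧
      L.o y * ((D.q : ℝ) ^ D.t - 1) = - ((D.q : ℝ) ^ D.k - (D.q : ℝ) ^ D.t) * L.o G.X) := by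
  have h := G.f_eq hy
  rw [D.f_large L hX] at h
  rcases lt_trichotomy (L.v y) 1 with h1 | h1 | h1
  · right
    refine ⟨h1, ?_⟩
    rw [D.f_small L h1] at h
    have := log_eq (a := 1) hy0 G.X_ne (by simpa using h)
    push_cast at this
    linarith
  · exfalso
    have h2 := D.f_unit L h1.le
    rw [h1, one_pow, mul_one] at h
    have h3 : L.v G.X ^ (D.q ^ D.t) < L.v G.X ^ (D.q ^ D.k) :=
      pow_lt_pow_right₀ hX (D.qpow_lt D.htk)
    have : L.v (D.f y) * L.v G.X ^ (D.q ^ D.t) ≤ 1 * L.v G.X ^ (D.q ^ D.t) := by gcongr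
    linarith
  · left
    rw [D.f_large L h1] at h
    have := log_eq hy0 G.X_ne (by simpa using h)
    push_cast at this
    refine L.v_eq_of_o hy0 G.X_ne ?_
    have h2 : ((D.q : ℝ) ^ D.k - (D.q : ℝ) ^ D.t) * (L.o y - L.o G.X) = 0 := by linarith
    rcases mul_eq_zero.1 h2 with h3 | h3
    · have := qr_lt (D := D); linarith
    · linarith

/-- counting with two classes of sizes -/
theorem two_class (W : Finset Ω) (hW : W ⊆ G.V) (hW0 : (0 : Ω) ∈ W) (r0 r1 : ℝ)
    (h0 : ∀ y ∈ W, y ≠ 0 → L.o y = r0) (h1 : ∀ y ∈ G.V, y ∉ W → L.o y = r1) :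
    ((W.card : ℝ) - 1) * r0 + ((D.q : ℝ) ^ D.k - W.card) * r1 = 0 := by
  classical
  have hV := G.prodV
  rw [← Finset.sum_erase G.V (show L.o (0 : Ω) = 0 by simp [LV.o])] at hV
  have hsplit : G.V.erase 0 = (W.erase 0) ∪ (G.V \ W) := by
    ext y
    simp only [Finset.mem_union, Finset.mem_erase, Finset.mem_sdiff]
    constructor
    · rintro ⟨h', h⟩
      by_cases hy : y ∈ W
      · exact Or.inl ⟨h', hy⟩
      · exact Or.inr ⟨h, hy⟩
    · rintro (⟨h, h'⟩ | ⟨h, h'⟩)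
      · exact ⟨h, hW h'⟩
      · exact ⟨fun h0 => h' (h0 ▸ hW0), h⟩
  have hd : Disjoint (W.erase 0) (G.V \ W) :=
    Finset.disjoint_of_subset_left (Finset.erase_subset _ _) Finset.disjoint_sdiff
  rw [hsplit, Finset.sum_union hd,
    Finset.sum_congr rfl (fun y hy => h0 y (Finset.mem_of_mem_erase hy) (Finset.ne_of_mem_erase hy)),
    Finset.sum_congr rfl (fun y hy => h1 y (Finset.mem_sdiff.1 hy).1 (Finset.mem_sdiff.1 hy).2),
    Finset.sum_const, Finset.sum_const, nsmul_eq_mul, nsmul_eq_mul, Finset.card_erase_of_mem hW0,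
    Finset.card_sdiff_of_subset hW, G.cardV, Nat.cast_sub (Finset.card_pos.2 ⟨0, hW0⟩),
    Nat.cast_sub (by rw [← G.cardV]; exact Finset.card_le_card hW)] at hV
  push_cast at hV
  exact hV

theorem full [IsAlgClosed Ω] [Algebra.IsAlgebraic k Ω] {y : Ω} (hy : y ∈ G.S) (B : Finset Ω)
    (hdvd : B.card ∣ (minpoly k y).natDegree) (hB : ∀ σ : Ω ≃ₐ[k] Ω, σ y ∈ B) : B ⊆ G.S := by
  classical
  have hyint : IsIntegral k y := Algebra.IsIntegral.isIntegral y
  set O : Finset Ω := ((minpoly k y).map (algebraMap k Ω)).roots.toFinset with hO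
  have hsep := G.sep y (G.V_S hy)
  have hOc : O.card = (minpoly k y).natDegree := by
    rw [hO, Multiset.toFinset_card_of_nodup (Polynomial.nodup_roots hsep.map),
      ← (IsAlgClosed.splits _).natDegree_eq_card_roots, Polynomial.natDegree_map]
  have hOm : ∀ z ∈ O, ∃ σ : Ω ≃ₐ[k] Ω, σ y = z := by
    intro z hz
    rw [hO, Multiset.mem_toFinset, Polynomial.mem_roots', Polynomial.IsRoot.def,
      Polynomial.eval_map_algebraMap] at hz
    exact LV.exists_sigma hz.2
  have hsub : O ⊆ B := by
    intro z hz
    obtain ⟨σ, rfl⟩ := hOm z hz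
    exact hB σ
  have heq : O = B := by
    refine Finset.eq_of_subset_of_card_le hsub ?_
    rw [hOc]
    exact Nat.le_of_dvd (minpoly.natDegree_pos hyint) hdvd
  intro z hz
  rw [← heq] at hz
  obtain ⟨σ, rfl⟩ := hOm z hz
  exact G.conjS σ y hy

end Pl

namespace Pl
variable {K : Type} [Field K] {D : Dat K} {k Ω : Type} [Field k] [Field Ω] [Algebra K k]
    [Algebra k Ω] [Algebra K Ω] {L : LV K k Ω} (G : Pl D L)

theorem _root_.Dat.f_small' (D : Dat K) (L : LV K k Ω) {y : Ω} (hy : y ≠ 0) (h : L.v y < 1) :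
    L.v (D.f y - algebraMap K Ω (D.c 0) * y) < L.v y := by
  have hpos := L.v_pos hy
  unfold Dat.f
  rw [Finset.sum_range_succ', pow_zero, pow_one, add_sub_cancel_right]
  refine L.v_sum_lt _ _ hpos fun j _ => ?_
  refine (L.v_const_mul_le _ _).trans_lt ?_
  rw [map_pow]
  refine pow_lt_self_of_lt_one₀ hpos h ?_
  calc 1 < D.q := D.two_le_q
    _ = D.q ^ 1 := (pow_one _).symm
    _ ≤ _ := D.qpow_le (by omega)

theorem _root_.Dat.f_large' (D : Dat K) (L : LV K k Ω) {y : Ω} (h : 1 < L.v y) :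
    L.v (D.f y - y ^ (D.q ^ D.k)) < L.v y ^ (D.q ^ D.k) := by
  unfold Dat.f
  rw [Finset.sum_range_succ, D.ck, map_one, one_mul, add_sub_cancel_right]
  refine L.v_sum_lt _ _ (by positivity) fun j hj => ?_
  refine (L.v_const_mul_le _ _).trans_lt ?_
  rw [map_pow]
  exact pow_lt_pow_right₀ h (D.qpow_lt (Finset.mem_range.1 hj))

open Classical in
/-- pairs whose difference is in `W` -/
noncomputable def pairs (W : Finset Ω) : Finset (Ω × Ω) :=
  (G.S ×ˢ G.S').filter (fun z => z.1 - z.2 ∈ W)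

theorem pair_sum (W : Finset Ω) (r0 r1 : ℝ)
    (h0 : ∀ y ∈ W, y ≠ 0 → L.o y = r0) (h1 : ∀ y ∈ G.V, y ∉ W → L.o y = r1) :
    ∑ z ∈ G.S ×ˢ G.S', L.o (z.1 - z.2)
      = (G.pairs W).card * r0 + ((G.S.card : ℝ) * G.S'.card - (G.pairs W).card) * r1 := by
  classical
  rw [← Finset.sum_filter_add_sum_filter_not (G.S ×ˢ G.S') (fun z => z.1 - z.2 ∈ W)]
  have e0 : ∀ z ∈ (G.S ×ˢ G.S').filter (fun z => z.1 - z.2 ∈ W), L.o (z.1 - z.2) = r0 := by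
    intro z hz
    rw [Finset.mem_filter, Finset.mem_product] at hz
    refine h0 _ hz.2 ?_
    intro h
    rw [sub_eq_zero] at h
    exact G.dSS' _ hz.1.1 (h ▸ hz.1.2)
  have e1 : ∀ z ∈ (G.S ×ˢ G.S').filter (fun z => ¬ (z.1 - z.2 ∈ W)), L.o (z.1 - z.2) = r1 := by
    intro z hz
    rw [Finset.mem_filter, Finset.mem_product] at hz
    exact h1 _ (G.V_sub (G.V_S hz.1.1) (G.V_S' hz.1.2)) hz.2
  rw [Finset.sum_congr rfl e0, Finset.sum_congr rfl e1, Finset.sum_const, Finset.sum_const,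
    nsmul_eq_mul, nsmul_eq_mul]
  have hc := Finset.card_filter_add_card_filter_not (s := G.S ×ˢ G.S') (fun z => z.1 - z.2 ∈ W)
  rw [Finset.card_product] at hc
  have hp : (G.pairs W).card = ((G.S ×ˢ G.S').filter (fun z => z.1 - z.2 ∈ W)).card := by
    unfold pairs; congr
  rw [hp]
  have hc' : (((G.S ×ˢ G.S').filter (fun z => z.1 - z.2 ∈ W)).card : ℝ)
    + ((G.S ×ˢ G.S').filter (fun z => ¬ (z.1 - z.2 ∈ W))).card = (G.S.card : ℝ) * G.S'.card := by
    exact_mod_cast hc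
  rw [← hc']
  ring

open Classical in
/-- the small elements at the place zero -/
noncomputable def W0 : Finset Ω := G.V.filter (fun y => L.v y ≤ L.v G.X)

theorem mem_W0 (y : Ω) : y ∈ G.W0 ↔ y ∈ G.V ∧ L.v y ≤ L.v G.X := by
  unfold W0; rw [Finset.mem_filter]

theorem W0_sub {y z : Ω} (hy : y ∈ G.W0) (hz : z ∈ G.W0) : y - z ∈ G.W0 := by
  rw [mem_W0] at *
  exact ⟨G.V_sub hy.1 hz.1, L.v_sub_le' hy.2 hz.2⟩

theorem W0_zero : (0 : Ω) ∈ G.W0 := by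
  rw [mem_W0]
  exact ⟨G.V_zero, by simp⟩

/-- the number `m` -/
def _root_.Dat.m (D : Dat K) : ℕ := D.k - D.t

theorem qk_eq : (D.q : ℝ) ^ D.k = (D.q : ℝ) ^ D.t * (D.q : ℝ) ^ D.m := by
  rw [← pow_add, Dat.m]; congr 1; have := D.htk; omega

theorem qk_eq' : D.q ^ D.k = D.q ^ D.t * D.q ^ D.m := by
  rw [← pow_add, Dat.m]; congr 1; have := D.htk; omega

theorem one_lt_qm : (1 : ℝ) < (D.q : ℝ) ^ D.m := by
  have := D.qpow_lt (show 0 < D.m by have := D.htk; unfold Dat.m; omega)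
  rw [pow_zero] at this
  exact_mod_cast this

section zero
variable (hx : G.x = L.T ^ (D.q ^ D.m - 1))

theorem oX0 (hx : G.x = L.T ^ (D.q ^ D.m - 1)) : L.o G.X = (D.q : ℝ) ^ D.m - 1 := by
  unfold X
  rw [hx, map_pow, L.o_pow, L.o_T, mul_one, Nat.cast_sub (D.qpow_pos _)]
  push_cast; rfl

theorem vX0 (hx : G.x = L.T ^ (D.q ^ D.m - 1)) : L.v G.X < 1 := by
  have h1 := one_lt_qm (D := D)
  have h2 := G.oX0 hx
  have : L.o (1 : Ω) < L.o G.X := by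
    rw [h2]
    have : L.o (1 : Ω) = 0 := by simp [LV.o]
    linarith
  have := (L.o_lt_iff one_ne_zero G.X_ne).1 this
  simpa using this

theorem W0_o {y : Ω} (hx : G.x = L.T ^ (D.q ^ D.m - 1)) (hy : y ∈ G.W0) (hy0 : y ≠ 0) :
    L.o y = (D.q : ℝ) ^ D.m - 1 := by
  rw [← G.oX0 hx]
  rw [mem_W0] at hy
  refine L.o_congr ?_
  rcases G.dich0 (G.vX0 hx) hy.1 hy0 with h | h
  · exact h
  · have := G.vX0 hx; linarith [h.1, hy.2]

theorem nW0_o {y : Ω} (hx : G.x = L.T ^ (D.q ^ D.m - 1)) (hy : y ∈ G.V) (hyW : y ∉ G.W0) :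
    1 < L.v y ∧ L.o y = -((D.q : ℝ) ^ D.t - 1) / (D.q : ℝ) ^ D.t := by
  have hy0 : y ≠ 0 := fun h => hyW (h ▸ G.W0_zero)
  rcases G.dich0 (G.vX0 hx) hy hy0 with h | h
  · exact absurd ((G.mem_W0 y).2 ⟨hy, h.le⟩) hyW
  · refine ⟨h.1, ?_⟩
    have h2 := h.2
    rw [G.oX0 hx, qk_eq] at h2
    have hq : (0 : ℝ) < (D.q : ℝ) ^ D.t := lt_trans one_pos one_lt_qt
    have h3 := one_lt_qm (D := D)
    rw [eq_div_iff hq.ne']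
    refine mul_right_cancel₀ (show (D.q : ℝ) ^ D.m - 1 ≠ 0 by linarith) ?_
    linarith

theorem card_W0 (hx : G.x = L.T ^ (D.q ^ D.m - 1)) : G.W0.card = D.q ^ D.t := by
  have h := G.two_class G.W0 (fun y hy => ((G.mem_W0 y).1 hy).1) G.W0_zero _ _
    (fun y hy hy0 => G.W0_o hx hy hy0) (fun y hy hy0 => (G.nW0_o hx hy hy0).2)
  rw [qk_eq] at h
  have h1 := one_lt_qm (D := D)
  have h2 := one_lt_qt (D := D)
  have hq : (0 : ℝ) < (D.q : ℝ) ^ D.t := lt_trans one_pos one_lt_qt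
  field_simp at h
  have h3 : ((G.W0.card : ℝ) - (D.q : ℝ) ^ D.t) * ((D.q : ℝ) ^ D.t * (D.q : ℝ) ^ D.m - 1) = 0 := by
    nlinarith
  rcases mul_eq_zero.1 h3 with h4 | h4
  · have : (G.W0.card : ℝ) = (D.q : ℝ) ^ D.t := by linarith
    exact_mod_cast this
  · nlinarith

/-- from `a * (Q-1)/Q` being an integer deduce `Q ∣ a` -/
theorem dvd_of_int {Q a : ℕ} (hQ : 0 < Q) (j : ℤ) (h : (a : ℝ) * (((Q : ℝ) - 1) / Q) = j) : Q ∣ a := by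
  have hQ' : (Q : ℝ) ≠ 0 := by exact_mod_cast hQ.ne'
  field_simp at h
  have h2 : (a : ℤ) * (Q - 1) = Q * j := by exact_mod_cast h
  have : (Q : ℤ) ∣ a := ⟨a - j, by linarith⟩
  exact_mod_cast this

theorem z_dvd (hx : G.x = L.T ^ (D.q ^ D.m - 1)) (w b : ℕ)
    (hw : open Classical in w = (G.S.filter (· ∈ G.W0)).card)
    (hb : open Classical in b = (G.S.filter (· ∉ G.W0)).card) : D.q ^ D.t ∣ b := by
  classical
  obtain ⟨d, hd⟩ := G.prodS 0
  obtain ⟨j, hj⟩ := L.o_base d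
  have hne : ∀ y ∈ G.S, y ≠ 0 := by
    rintro y hy rfl
    exact G.dSL _ hy ((G.memL 0).2 ⟨0, by simp [zero_pow D.q_pos.ne'], by simp⟩)
  rw [← hd, L.o_prod _ _ (fun y hy => by simpa using hne y hy)] at hj
  simp only [map_zero, zero_sub, L.o_neg] at hj
  rw [← Finset.sum_filter_add_sum_filter_not G.S (· ∈ G.W0),
    Finset.sum_congr rfl (fun y hy => G.W0_o hx (Finset.mem_filter.1 hy).2 (hne y (Finset.mem_filter.1 hy).1)),
    Finset.sum_congr rfl (fun y hy => (G.nW0_o hx (G.V_S (Finset.mem_filter.1 hy).1) (Finset.mem_filter.1 hy).2).2),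
    Finset.sum_const, Finset.sum_const, nsmul_eq_mul, nsmul_eq_mul] at hj
  have hw' : w = (G.S.filter (· ∈ G.W0)).card := by rw [hw]
  have hb' : b = (G.S.filter (· ∉ G.W0)).card := by rw [hb]
  rw [← hw', ← hb'] at hj
  refine dvd_of_int (D.qpow_pos _) (w * ((D.q : ℤ) ^ D.m - 1) - j) ?_
  push_cast
  rw [← hj]
  ring

variable [IsAlgClosed Ω] [Algebra.IsAlgebraic k Ω] [IsAlgClosed K] [IsScalarTower K k Ω]

theorem sigma_const (σ : Ω ≃ₐ[k] Ω) (c : K) : σ (algebraMap K Ω c) = algebraMap K Ω c := by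
  rw [IsScalarTower.algebraMap_apply K k Ω, σ.commutes]

theorem full0 (hx : G.x = L.T ^ (D.q ^ D.m - 1)) {y u : Ω} (hy : y ∈ G.S) (hyW : y ∉ G.W0)
    (hu : u ∈ G.W0) : y + u ∈ G.S := by
  classical
  obtain ⟨hv1, ho⟩ := G.nW0_o hx (G.V_S hy) hyW
  have hy0 : y ≠ 0 := fun h => hyW (h ▸ G.W0_zero)
  have hqt : (0 : ℝ) < (D.q : ℝ) ^ D.t := lt_trans one_pos one_lt_qt
  set τ : Ω := algebraMap k Ω L.T with hτ
  have hτ0 : τ ≠ 0 := by simpa [hτ] using L.T_ne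
  set Q := D.q ^ D.t with hQ
  set R := D.q ^ D.m with hR
  have hQ1 : 1 ≤ Q := D.qpow_pos _
  have hR1 : 2 ≤ R := by
    have := one_lt_qm (D := D)
    have : 1 < R := by exact_mod_cast this
    omega
  have hX : G.X = τ ^ (R - 1) := by unfold X; rw [hx, map_pow]
  -- the unit
  set η : Ω := y ^ Q * τ ^ (Q - 1) with hη
  have hη0 : η ≠ 0 := mul_ne_zero (pow_ne_zero _ hy0) (pow_ne_zero _ hτ0)
  have hoη : L.o η = 0 := by
    rw [hη, L.o_mul (pow_ne_zero _ hy0) (pow_ne_zero _ hτ0), L.o_pow, L.o_pow, ho, L.o_T,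
      Nat.cast_sub hQ1, hQ]
    push_cast
    field_simp
    ring
  have hvη : L.v η = 1 := by
    have := L.v_eq_of_o hη0 one_ne_zero (hoη.trans (by simp [LV.o]))
    simpa using this
  -- residue
  have hres : ∃ c : K, c ^ R = D.c 0 * c ∧ L.v (η - algebraMap K Ω c) < 1 := by
    refine L.exists_residue hR1 _ _ ?_
    have hX0 := G.X_ne
    have hXv := L.v_pos hX0
    have hyv := L.v_pos hy0
    have hmem := (G.mem_iff y).1 (G.V_S hy)
    have hr2 := D.f_small' L hX0 (G.vX0 hx)
    have hr1 := D.f_large' L hv1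
    have hkQR : D.q ^ D.k = Q * R := qk_eq'
    rw [hkQR] at hr1
    rw [← hQ] at hmem
    set r1 := D.f y - y ^ (Q * R) with hr1'
    set r2 := D.f G.X - algebraMap K Ω (D.c 0) * G.X with hr2'
    have hηR : η ^ R = y ^ (Q * R) * G.X ^ (Q - 1) * τ ^ (Q - 1) := by
      rw [hη, hX, mul_pow, ← pow_mul, ← pow_mul, ← pow_mul, mul_assoc, ← pow_add]
      congr 2
      obtain ⟨R', hR'⟩ : ∃ R', R = R' + 1 := ⟨R - 1, by omega⟩
      rw [hR', Nat.add_sub_cancel]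
      ring
    have hXQ : G.X ^ Q = G.X ^ (Q - 1) * G.X := by
      rw [← pow_succ]; congr 1; omega
    have hkey : η ^ R - algebraMap K Ω (D.c 0) * η =
        η * (r2 / G.X) - r1 * (G.X ^ (Q - 1) * τ ^ (Q - 1)) := by
      refine mul_right_cancel₀ hX0 ?_
      have e1 : D.f y = r1 + y ^ (Q * R) := by rw [hr1']; ring
      have e2 : D.f G.X = r2 + algebraMap K Ω (D.c 0) * G.X := by rw [hr2']; ring
      rw [e1, e2, hXQ] at hmem
      rw [hηR, sub_mul, sub_mul, mul_assoc η, div_mul_cancel₀ _ hX0, hη]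
      linear_combination τ ^ (Q - 1) * hmem
    rw [hkey]
    refine L.v_sub_lt ?_ ?_
    · rw [map_mul, hvη, one_mul, map_div₀, div_lt_one hXv]
      exact hr2
    · have hu : L.v (y ^ (Q * R)) * L.v (G.X ^ (Q - 1) * τ ^ (Q - 1)) = 1 := by
        rw [← map_mul, ← mul_assoc, ← hηR, map_pow, hvη, one_pow]
      rw [map_mul, ← hu]
      rw [← map_pow] at hr1
      refine mul_lt_mul_of_pos_right hr1 (L.v_pos ?_)
      exact mul_ne_zero (pow_ne_zero _ hX0) (pow_ne_zero _ hτ0)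
  obtain ⟨c, -, hc⟩ := hres
  -- conjugates
  have hconj : ∀ σ : Ω ≃ₐ[k] Ω, σ y - y ∈ G.W0 := by
    intro σ
    have hση : σ η = (σ y) ^ Q * τ ^ (Q - 1) := by
      rw [hη, map_mul, map_pow, map_pow, hτ, σ.commutes]
    have h1 : L.v (σ η - algebraMap K Ω c) < 1 := by
      have := L.v_sigma σ (η - algebraMap K Ω c)
      rw [map_sub, sigma_const] at this
      rwa [this]
    have h2 : L.v ((σ y - y) ^ Q * τ ^ (Q - 1)) < 1 := by
      have : (σ y - y) ^ Q * τ ^ (Q - 1) = (σ η - algebraMap K Ω c) - (η - algebraMap K Ω c) := by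
        rw [hση, hQ, D.sub_pow_q, hη]; ring
      rw [this]
      exact L.v_sub_lt h1 hc
    by_contra hcon
    have hV := G.V_sub (G.V_S (G.conjS σ y hy)) (G.V_S hy)
    have ho' := (G.nW0_o hx hV hcon).2
    have hd0 : σ y - y ≠ 0 := fun h => hcon (h ▸ G.W0_zero)
    have h3 : L.v (σ y - y) = L.v y := L.v_eq_of_o hd0 hy0 (ho'.trans ho.symm)
    rw [map_mul, map_pow, h3, ← map_pow, ← map_mul] at h2
    exact absurd hvη h2.ne
  have hcard : (G.W0.image (fun u => y + u)).card = Q := by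
    rw [Finset.card_image_of_injective _ (add_right_injective y), G.card_W0 hx]
  have := G.full hy (G.W0.image (fun u => y + u)) ?_ ?_
  · exact this (Finset.mem_image_of_mem _ hu)
  · rw [hcard]
    obtain ⟨j, hj⟩ := L.o_mul_deg (k := k) y
    refine dvd_of_int hQ1 (-j) ?_
    push_cast
    rw [← hj, ho, hQ]
    push_cast
    ring
  · intro σ
    exact Finset.mem_image.2 ⟨_, hconj σ, by ring⟩

open Classical in
theorem pairs0 (hx : G.x = L.T ^ (D.q ^ D.m - 1)) :
    (G.pairs G.W0).card ≤ (G.S.filter (· ∈ G.W0)).card * (G.S'.filter (· ∈ G.W0)).card := by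
  rw [← Finset.card_product]
  refine Finset.card_le_card ?_
  intro z hz
  unfold pairs at hz
  rw [Finset.mem_filter, Finset.mem_product] at hz
  rw [Finset.mem_product, Finset.mem_filter, Finset.mem_filter]
  have h1 : z.1 ∈ G.W0 := by
    by_contra h
    have h2 : z.2 - z.1 ∈ G.W0 := by
      have := G.W0_sub G.W0_zero hz.2
      simpa using this
    have := G.full0 hx hz.1.1 h h2
    rw [add_sub_cancel] at this
    exact G.dSS' _ this hz.1.2
  refine ⟨⟨hz.1.1, h1⟩, hz.1.2, ?_⟩
  have := G.W0_sub h1 hz.2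
  simpa using this

open Classical in
theorem sum_w (hx : G.x = L.T ^ (D.q ^ D.m - 1)) :
    (G.S.filter (· ∈ G.W0)).card + (G.S'.filter (· ∈ G.W0)).card + D.q = D.q ^ D.t := by
  have hline : ∀ y ∈ G.line, y ∈ G.W0 := by
    intro y hy
    rw [mem_W0]
    refine ⟨G.V_line hy, ?_⟩
    obtain ⟨c, -, rfl⟩ := (G.memL y).1 hy
    exact L.v_const_mul_le _ _
  have : G.W0 = (G.S.filter (· ∈ G.W0)) ∪ (G.S'.filter (· ∈ G.W0)) ∪ G.line := by
    ext y
    simp only [Finset.mem_union, Finset.mem_filter]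
    constructor
    · intro h
      have := (G.cover y).1 ((G.mem_W0 y).1 h).1
      tauto
    · rintro ((h | h) | h)
      · exact h.2
      · exact h.2
      · exact hline y h
  rw [← G.card_W0 hx, ← G.cardL]
  conv_rhs => rw [this]
  rw [Finset.card_union_of_disjoint, Finset.card_union_of_disjoint]
  · rw [Finset.disjoint_left]
    intro y h h'
    exact G.dSS' y (Finset.mem_filter.1 h).1 (Finset.mem_filter.1 h').1
  · rw [Finset.disjoint_left]
    intro y h h'
    rcases Finset.mem_union.1 h with h | h
    · exact G.dSL y (Finset.mem_filter.1 h).1 h'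
    · exact G.dSL' y (Finset.mem_filter.1 h).1 h'

end zero

end Pl

namespace Pl
variable {K : Type} [Field K] {D : Dat K} {k Ω : Type} [Field k] [Field Ω] [Algebra K k]
    [Algebra k Ω] [Algebra K Ω] {L : LV K k Ω} (G : Pl D L)

open Classical in
/-- the small elements at infinity -/
noncomputable def WI : Finset Ω := G.V.filter (fun y => L.v y < L.v G.X)

theorem mem_WI (y : Ω) : y ∈ G.WI ↔ y ∈ G.V ∧ L.v y < L.v G.X := by
  unfold WI; rw [Finset.mem_filter]

theorem WI_sub {y z : Ω} (hy : y ∈ G.WI) (hz : z ∈ G.WI) : y - z ∈ G.WI := by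
  rw [mem_WI] at *
  exact ⟨G.V_sub hy.1 hz.1, L.v_sub_lt hy.2 hz.2⟩

theorem WI_zero : (0 : Ω) ∈ G.WI := by
  rw [mem_WI]
  exact ⟨G.V_zero, by simpa using G.X_ne⟩

theorem oXI (hx : G.x = L.T⁻¹) : L.o G.X = -1 := by
  unfold X
  rw [hx, map_inv₀, L.o_inv, L.o_T]

theorem vXI (hx : G.x = L.T⁻¹) : 1 < L.v G.X := by
  have h2 := G.oXI hx
  have : L.o G.X < L.o (1 : Ω) := by
    rw [h2]
    have : L.o (1 : Ω) = 0 := by simp [LV.o]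
    linarith
  have := (L.o_lt_iff G.X_ne one_ne_zero).1 this
  simpa using this

theorem WI_o {y : Ω} (hx : G.x = L.T⁻¹) (hy : y ∈ G.WI) (hy0 : y ≠ 0) :
    L.o y = ((D.q : ℝ) ^ D.k - (D.q : ℝ) ^ D.t) / ((D.q : ℝ) ^ D.t - 1) := by
  rw [mem_WI] at hy
  rcases G.dichI (G.vXI hx) hy.1 hy0 with h | h
  · exact absurd h hy.2.ne
  · have h2 := h.2
    rw [G.oXI hx] at h2
    have := one_lt_qt (D := D)
    rw [eq_div_iff (by linarith)]
    linarith

theorem nWI_v {y : Ω} (hx : G.x = L.T⁻¹) (hy : y ∈ G.V) (hyW : y ∉ G.WI) : L.v y = L.v G.X := by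
  have hy0 : y ≠ 0 := fun h => hyW (h ▸ G.WI_zero)
  rcases G.dichI (G.vXI hx) hy hy0 with h | h
  · exact h
  · exact absurd ((G.mem_WI y).2 ⟨hy, h.1.trans (G.vXI hx)⟩) hyW

theorem nWI_o {y : Ω} (hx : G.x = L.T⁻¹) (hy : y ∈ G.V) (hyW : y ∉ G.WI) : L.o y = -1 := by
  rw [← G.oXI hx]
  exact L.o_congr (G.nWI_v hx hy hyW)

theorem vle {y : Ω} (hx : G.x = L.T⁻¹) (hy : y ∈ G.V) : L.v y ≤ L.v G.X := by
  by_cases h : y ∈ G.WI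
  · exact ((G.mem_WI y).1 h).2.le
  · exact (G.nWI_v hx hy h).le

theorem card_WI (hx : G.x = L.T⁻¹) : G.WI.card = D.q ^ D.t := by
  have h := G.two_class G.WI (fun y hy => ((G.mem_WI y).1 hy).1) G.WI_zero _ _
    (fun y hy hy0 => G.WI_o hx hy hy0) (fun y hy hy0 => G.nWI_o hx hy hy0)
  have h1 := one_lt_qt (D := D)
  have h2 := qr_lt (D := D)
  have h4 : (D.q : ℝ) ^ D.t - 1 ≠ 0 := by linarith
  rw [mul_div_assoc', div_add' _ _ _ h4, div_eq_zero_iff] at h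
  have h := h.resolve_right h4
  have h3 : ((G.WI.card : ℝ) - (D.q : ℝ) ^ D.t) * ((D.q : ℝ) ^ D.k - 1) = 0 := by
    nlinarith
  rcases mul_eq_zero.1 h3 with h4 | h4
  · have : (G.WI.card : ℝ) = (D.q : ℝ) ^ D.t := by linarith
    exact_mod_cast this
  · nlinarith

theorem _root_.Dat.f_large'' (D : Dat K) (L : LV K k Ω) {y X : Ω} (h : 1 < L.v X) (hy : L.v y ≤ L.v X) :
    L.v (D.f y - y ^ (D.q ^ D.k)) < L.v X ^ (D.q ^ D.k) := by
  unfold Dat.f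
  rw [Finset.sum_range_succ, D.ck, map_one, one_mul, add_sub_cancel_right]
  refine L.v_sum_lt _ _ (by positivity) fun j hj => ?_
  refine (L.v_const_mul_le _ _).trans_lt ?_
  rw [map_pow]
  calc L.v y ^ (D.q ^ j) ≤ L.v X ^ (D.q ^ j) := pow_le_pow_left₀ (L.v.nonneg _) hy _
    _ < _ := pow_lt_pow_right₀ h (D.qpow_lt (Finset.mem_range.1 hj))

theorem residueI [IsAlgClosed K] {y : Ω} (hx : G.x = L.T⁻¹) (hy : y ∈ G.V) :
    ∃ c : K, c ^ (D.q ^ D.m) = c ∧ L.v (y - algebraMap K Ω c * G.X) < L.v G.X := by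
  have hX0 := G.X_ne
  have hXv := L.v_pos hX0
  have hX1 := G.vXI hx
  have hyX := G.vle hx hy
  set Q := D.q ^ D.t with hQ
  set R := D.q ^ D.m with hR
  have hR1 : 2 ≤ R := by
    have := one_lt_qm (D := D)
    have : 1 < R := by exact_mod_cast this
    omega
  have hmem := (G.mem_iff y).1 hy
  have hr2 := D.f_large'' L hX1 le_rfl
  have hr1 := D.f_large'' L hX1 hyX
  have hkQR : D.q ^ D.k = Q * R := qk_eq'
  rw [hkQR] at hr1 hr2
  rw [← hQ] at hmem
  set r1 := D.f y - y ^ (Q * R) with hr1'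
  set r2 := D.f G.X - G.X ^ (Q * R) with hr2'
  set ρ := y / G.X with hρ
  have hyρ : y = ρ * G.X := by rw [hρ, div_mul_cancel₀ _ hX0]
  have hρ1 : L.v ρ ≤ 1 := by rw [hρ, map_div₀]; exact div_le_one_of_le₀ hyX hXv.le
  obtain ⟨c, hc, hc'⟩ := L.exists_residue hR1 (1 : K) ρ (by
    rw [map_one, one_mul]
    have hkey : (ρ ^ R - ρ) ^ Q = (r2 * ρ ^ Q - r1) / G.X ^ (Q * R) := by
      rw [hQ, D.sub_pow_q, ← hQ, eq_div_iff (pow_ne_zero _ hX0), ← pow_mul]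
      refine mul_right_cancel₀ (pow_ne_zero Q hX0) ?_
      have e1 : D.f y = r1 + y ^ (Q * R) := by rw [hr1']; ring
      have e2 : D.f G.X = r2 + G.X ^ (Q * R) := by rw [hr2']; ring
      rw [e1, e2, hyρ, mul_pow, mul_pow] at hmem
      rw [mul_comm R Q]
      linear_combination hmem
    have : L.v (ρ ^ R - ρ) ^ Q < 1 := by
      rw [← map_pow, hkey, map_div₀, map_pow, div_lt_one (by positivity)]
      refine L.v_sub_lt ?_ hr1
      rw [map_mul, map_pow]
      calc _ ≤ L.v r2 * 1 := by
            gcongr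
            exact pow_le_one₀ (L.v.nonneg _) hρ1
        _ < _ := by rw [mul_one]; exact hr2
    by_contra! hcon
    exact absurd this (not_lt.2 (one_le_pow₀ hcon)))
  refine ⟨c, by rw [hc, one_mul], ?_⟩
  have : y - algebraMap K Ω c * G.X = (ρ - algebraMap K Ω c) * G.X := by rw [hyρ]; ring
  rw [this, map_mul]
  calc _ < 1 * L.v G.X := by gcongr
    _ = _ := one_mul _

open Classical in
/-- fibre of `S` over a residue -/
noncomputable def Sf (c : K) : Finset Ω := G.S.filter (fun y => L.v (y - algebraMap K Ω c * G.X) < L.v G.X)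

open Classical in
/-- fibre of `S'` over a residue -/
noncomputable def Sf' (c : K) : Finset Ω := G.S'.filter (fun y => L.v (y - algebraMap K Ω c * G.X) < L.v G.X)

theorem mem_Sf (c : K) (y : Ω) : y ∈ G.Sf c ↔ y ∈ G.S ∧ L.v (y - algebraMap K Ω c * G.X) < L.v G.X := by
  unfold Sf; rw [Finset.mem_filter]

theorem mem_Sf' (c : K) (y : Ω) : y ∈ G.Sf' c ↔ y ∈ G.S' ∧ L.v (y - algebraMap K Ω c * G.X) < L.v G.X := by
  unfold Sf'; rw [Finset.mem_filter]

theorem fib_card (hx : G.x = L.T⁻¹) (c : K) (B : Finset Ω) (hB : ∀ y ∈ B, y ∈ G.V)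
    (hB' : ∀ y ∈ B, L.v (y - algebraMap K Ω c * G.X) < L.v G.X) : B.card ≤ D.q ^ D.t := by
  classical
  rw [← G.card_WI hx]
  rcases B.eq_empty_or_nonempty with h | ⟨z, hz⟩
  · simp [h]
  refine Finset.card_le_card_of_injOn (fun y => y - z) ?_ ?_
  · intro y hy
    refine Finset.mem_coe.2 ((G.mem_WI _).2 ⟨G.V_sub (hB y hy) (hB z hz), ?_⟩)
    have := L.v_sub_lt (hB' y hy) (hB' z hz)
    simpa using this
  · intro y _ y' _ h
    simpa using h

theorem Sf_card (hx : G.x = L.T⁻¹) (c : K) : (G.Sf c).card + (G.Sf' c).card ≤ D.q ^ D.t := by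
  classical
  rw [← Finset.card_union_of_disjoint]
  · refine G.fib_card hx c _ ?_ ?_
    · intro y hy
      rcases Finset.mem_union.1 hy with h | h
      · exact G.V_S ((G.mem_Sf c y).1 h).1
      · exact G.V_S' ((G.mem_Sf' c y).1 h).1
    · intro y hy
      rcases Finset.mem_union.1 hy with h | h
      · exact ((G.mem_Sf c y).1 h).2
      · exact ((G.mem_Sf' c y).1 h).2
  · rw [Finset.disjoint_left]
    intro y h h'
    exact G.dSS' y ((G.mem_Sf c y).1 h).1 ((G.mem_Sf' c y).1 h').1

theorem Sf_card_line (hx : G.x = L.T⁻¹) (c : K) (hc : c ^ D.q = c) :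
    (G.Sf c).card + (G.Sf' c).card + 1 ≤ D.q ^ D.t := by
  classical
  have hl : algebraMap K Ω c * G.X ∈ G.line := (G.memL _).2 ⟨c, hc, rfl⟩
  rw [← Finset.card_union_of_disjoint, ← Finset.card_insert_of_notMem (a := algebraMap K Ω c * G.X)]
  · refine G.fib_card hx c _ ?_ ?_
    · intro y hy
      rcases Finset.mem_insert.1 hy with rfl | hy
      · exact G.V_line hl
      rcases Finset.mem_union.1 hy with h | h
      · exact G.V_S ((G.mem_Sf c y).1 h).1
      · exact G.V_S' ((G.mem_Sf' c y).1 h).1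
    · intro y hy
      rcases Finset.mem_insert.1 hy with rfl | hy
      · simpa using G.X_ne
      rcases Finset.mem_union.1 hy with h | h
      · exact ((G.mem_Sf c y).1 h).2
      · exact ((G.mem_Sf' c y).1 h).2
  · intro hy
    rcases Finset.mem_union.1 hy with h | h
    · exact G.dSL _ ((G.mem_Sf c _).1 h).1 hl
    · exact G.dSL' _ ((G.mem_Sf' c _).1 h).1 hl
  · rw [Finset.disjoint_left]
    intro y h h'
    exact G.dSS' y ((G.mem_Sf c y).1 h).1 ((G.mem_Sf' c y).1 h').1

/-- step one of the analysis at infinity: the error term is integral -/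
theorem u_le_one (hx : G.x = L.T⁻¹) {y : Ω} (hy : y ∈ G.V) {c : K} (hc : c ^ (D.q ^ D.m) = c)
    (hu : L.v (y - algebraMap K Ω c * G.X) < L.v G.X) : L.v (y - algebraMap K Ω c * G.X) ≤ 1 := by
  by_contra! h1
  have hX0 := G.X_ne
  have hXv := L.v_pos hX0
  have hX1 := G.vXI hx
  set u := y - algebraMap K Ω c * G.X with hu'
  set Q := D.q ^ D.t with hQ
  have hmem := (G.mem_iff y).1 hy
  rw [← hQ] at hmem
  have hfc : D.f (algebraMap K Ω c * G.X) - algebraMap K Ω c ^ Q * D.f G.X =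
      ∑ j ∈ Finset.range D.k, algebraMap K Ω (D.c j * (c ^ (D.q ^ j) - c ^ Q)) * G.X ^ (D.q ^ j) := by
    unfold Dat.f
    rw [Finset.mul_sum, ← Finset.sum_sub_distrib, Finset.sum_range_succ]
    have : algebraMap K Ω (D.c D.k) * (algebraMap K Ω c * G.X) ^ D.q ^ D.k -
        algebraMap K Ω c ^ Q * (algebraMap K Ω (D.c D.k) * G.X ^ D.q ^ D.k) = 0 := by
      have : algebraMap K Ω c ^ (D.q ^ D.k) = algebraMap K Ω c ^ Q := by
        rw [qk_eq', mul_comm, pow_mul, ← map_pow, hc]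
      rw [mul_pow, this]; ring
    rw [this, add_zero]
    refine Finset.sum_congr rfl fun j _ => ?_
    rw [map_mul, map_sub, map_pow, map_pow]
    ring
  have hmain : D.f G.X * u ^ Q - D.f u * G.X ^ Q =
      G.X ^ Q * (D.f (algebraMap K Ω c * G.X) - algebraMap K Ω c ^ Q * D.f G.X) := by
    rw [hu', D.f_sub, hQ, D.sub_pow_q, ← hQ]
    linear_combination - hmem
  have hlt : L.v (D.f u * G.X ^ Q) < L.v (D.f G.X * u ^ Q) := by
    rw [map_mul, map_mul, D.f_large L hX1, D.f_large L h1, map_pow, map_pow]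
    have hkk : D.q ^ D.k = (D.q ^ D.k - Q) + Q := by
      have := D.qpow_lt D.htk; omega
    rw [hkk, pow_add, pow_add, mul_assoc, mul_assoc, mul_comm (L.v G.X ^ Q)]
    have : 0 < L.v u := by linarith
    refine mul_lt_mul_of_pos_right (pow_lt_pow_left₀ hu this.le ?_) (by positivity)
    have := D.qpow_lt D.htk; omega
  have h2 := L.v_sub_eq hlt
  rw [hmain, hfc, map_mul, map_mul, D.f_large L hX1, map_pow, map_pow] at h2
  have h3 : L.v (∑ j ∈ Finset.range D.k, algebraMap K Ω (D.c j * (c ^ (D.q ^ j) - c ^ Q)) * G.X ^ (D.q ^ j))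
      ≤ L.v G.X ^ (D.q ^ (D.k - 1)) := by
    refine L.v_sum_le _ _ (by positivity) fun j hj => (L.v_const_mul_le _ _).trans ?_
    rw [map_pow]
    exact pow_le_pow_right₀ hX1.le (D.qpow_le (by have := Finset.mem_range.1 hj; omega))
  have h4 : L.v G.X ^ (D.q ^ D.k) < L.v G.X ^ (D.q ^ D.k) * L.v u ^ Q := by
    have : 1 < L.v u ^ Q := one_lt_pow₀ h1 (D.qpow_ne _)
    have h0 : 0 < L.v G.X ^ (D.q ^ D.k) := by positivity
    nlinarith
  have h5 : L.v G.X ^ Q * L.v G.X ^ (D.q ^ (D.k - 1)) ≤ L.v G.X ^ (D.q ^ D.k) := by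
    rw [← pow_add]
    refine pow_le_pow_right₀ hX1.le ?_
    have hk : D.q ^ D.k = D.q * D.q ^ (D.k - 1) := by
      rw [← pow_succ']; congr 1; have := D.htk; omega
    have h6 : Q ≤ D.q ^ (D.k - 1) := D.qpow_le (by have := D.htk; omega)
    have := D.two_le_q
    nlinarith
  have h7 : L.v G.X ^ Q * L.v (∑ j ∈ Finset.range D.k, algebraMap K Ω (D.c j * (c ^ (D.q ^ j) - c ^ Q)) * G.X ^ (D.q ^ j))
      ≤ L.v G.X ^ Q * L.v G.X ^ (D.q ^ (D.k - 1)) := by gcongr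
  linarith

end Pl

theorem Dat.exists_root {K : Type} [Field K] [IsAlgClosed K] (D : Dat K) (j : ℕ) (b : K) :
    ∃ a : K, a ^ (D.q ^ j) = b := IsAlgClosed.exists_pow_nat_eq b (D.qpow_pos j)

/-- the wild bootstrapping -/
theorem wild_iter {K : Type} [Field K] [IsAlgClosed K] (D : Dat K) {k Ω : Type} [Field k] [Field Ω] [Algebra K k]
    [Algebra k Ω] [Algebra K Ω] [IsScalarTower K k Ω] (L : LV K k Ω) (E : IntermediateField k Ω)
    (X U : Ω) (hX : X ∈ E) (hU : U ∈ E) (a b : K) (hb : b ≠ 0)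
    (h : L.v (U ^ (D.q ^ D.t) - algebraMap K Ω b * X - algebraMap K Ω a * X ^ (D.q ^ D.i)) ≤ 1) :
    ∀ j ≤ D.t, ∃ Z ∈ E, L.v (X - Z ^ (D.q ^ j)) ≤ 1 := by
  have hconst : ∀ c : K, algebraMap K Ω c ∈ E := fun c => by
    rw [IsScalarTower.algebraMap_apply K k Ω]; exact E.algebraMap_mem _
  intro j
  induction j with
  | zero => intro _; exact ⟨X, hX, by simp⟩
  | succ j ih =>
    intro hj
    obtain ⟨Z, hZ, hZ1⟩ := ih (by omega)
    obtain ⟨β, hβ⟩ := D.exists_root (j + 1) b⁻¹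
    obtain ⟨α, hα⟩ := D.exists_root (j + 1) (a * b⁻¹)
    refine ⟨algebraMap K Ω β * U ^ (D.q ^ (D.t - (j + 1))) - algebraMap K Ω α * Z ^ (D.q ^ (D.i - 1)), ?_, ?_⟩
    · exact sub_mem (mul_mem (hconst _) (pow_mem hU _)) (mul_mem (hconst _) (pow_mem hZ _))
    · have e1 : D.q ^ (D.t - (j + 1)) * D.q ^ (j + 1) = D.q ^ D.t := by
        rw [← pow_add]; congr 1; omega
      have e2 : D.q ^ (D.i - 1) * D.q ^ (j + 1) = D.q ^ j * D.q ^ D.i := by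
        rw [← pow_add, ← pow_add]; congr 1; have := D.hi0; omega
      rw [D.sub_pow_q, mul_pow, mul_pow, ← pow_mul, ← pow_mul, e1, e2, ← map_pow, ← map_pow, hβ, hα]
      have hbb : algebraMap K Ω b⁻¹ * algebraMap K Ω b = 1 := by
        rw [← map_mul, inv_mul_cancel₀ hb, map_one]
      have : X - (algebraMap K Ω b⁻¹ * U ^ D.q ^ D.t - algebraMap K Ω (a * b⁻¹) * Z ^ (D.q ^ j * D.q ^ D.i))
          = - (algebraMap K Ω b⁻¹ * (U ^ (D.q ^ D.t) - algebraMap K Ω b * X - algebraMap K Ω a * X ^ (D.q ^ D.i)))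
            - algebraMap K Ω (a * b⁻¹) * (X - Z ^ (D.q ^ j)) ^ (D.q ^ D.i) := by
        rw [D.sub_pow_q, map_mul, ← pow_mul]
        linear_combination -X * hbb
      rw [this]
      refine L.v_sub_le' ?_ ?_
      · rw [L.v_neg]
        exact (L.v_const_mul_le _ _).trans h
      · refine (L.v_const_mul_le _ _).trans ?_
        rw [map_pow]
        exact pow_le_one₀ (L.v.nonneg _) hZ1

namespace Dat
variable {K : Type} [Field K] (D : Dat K) {L : Type} [Field L] [Algebra K L]

theorem sum_pow_q {ι : Type*} (s : Finset ι) (g : ι → L) (j : ℕ) :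
    (∑ i ∈ s, g i) ^ (D.q ^ j) = ∑ i ∈ s, g i ^ (D.q ^ j) := by
  haveI := D.charP L
  haveI := Fact.mk D.hp
  rw [D.hq, ← pow_mul]
  exact sum_pow_char_pow _ _ _ _

/-- low order part -/
noncomputable def f0 (y : L) : L := algebraMap K L (D.c 0) * y + algebraMap K L (D.c D.i) * y ^ (D.q ^ D.i)

theorem f0_add (x y : L) : D.f0 (x + y) = D.f0 x + D.f0 y := by
  unfold f0; rw [D.add_pow_q]; ring

theorem f_decomp [IsAlgClosed K] : ∃ B : ℕ → K, ∀ y : L,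
    D.f y = D.f0 y + (∑ j ∈ Finset.range (D.m + 1), algebraMap K L (B j) * y ^ (D.q ^ j)) ^ (D.q ^ D.t) := by
  choose B hB using fun j => IsAlgClosed.exists_pow_nat_eq (D.c (D.t + j)) (D.qpow_pos D.t)
  refine ⟨B, fun y => ?_⟩
  unfold f
  have hk : D.k + 1 = D.t + (D.m + 1) := by have := D.htk; unfold m; omega
  rw [hk, Finset.sum_range_add, D.sum_pow_q]
  congr 1
  · unfold f0
    rw [Finset.sum_eq_add (s := Finset.range D.t) 0 D.i D.hi0.ne]
    · simp
    · intro c hc hc'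
      rw [D.hci c (Nat.pos_of_ne_zero hc'.1) (Finset.mem_range.1 hc) hc'.2]; simp
    · intro h; exact absurd (Finset.mem_range.2 (by have := D.ht; omega)) h
    · intro h; exact absurd (Finset.mem_range.2 D.hit) h
  · refine Finset.sum_congr rfl fun j _ => ?_
    rw [mul_pow, ← map_pow, hB, ← pow_mul, ← pow_add, add_comm j]

end Dat

namespace Pl
variable {K : Type} [Field K] {D : Dat K} {k Ω : Type} [Field k] [Field Ω] [Algebra K k]
    [Algebra k Ω] [Algebra K Ω] {L : LV K k Ω} (G : Pl D L)
variable [IsAlgClosed Ω] [Algebra.IsAlgebraic k Ω] [IsAlgClosed K] [IsScalarTower K k Ω]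

open IntermediateField in
theorem wild_dvd (hx : G.x = L.T⁻¹) {y : Ω} (hy : y ∈ G.V) {c : K} (hc : c ^ (D.q ^ D.m) = c)
    (hu : L.v (y - algebraMap K Ω c * G.X) < L.v G.X) (hcQ : c ^ (D.q ^ D.t) ≠ c) :
    D.q ^ D.t ∣ (minpoly k y).natDegree := by
  have hu1 := G.u_le_one hx hy hc hu
  have hX0 := G.X_ne
  have hXv := L.v_pos hX0
  have hX1 := G.vXI hx
  have hmem := (G.mem_iff y).1 hy
  set u := y - algebraMap K Ω c * G.X with hu'
  have hyu : y = algebraMap K Ω c * G.X + u := by rw [hu']; ring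
  set Q := D.q ^ D.t with hQ
  obtain ⟨B, hB⟩ := D.f_decomp (L := Ω)
  set f1 : Ω → Ω := fun y => ∑ j ∈ Finset.range (D.m + 1), algebraMap K Ω (B j) * y ^ (D.q ^ j) with hf1
  have hB' : ∀ z : Ω, f1 z ^ Q = D.f z - D.f0 z := fun z => by rw [hB z, hf1, hQ]; ring
  set E : IntermediateField k Ω := k⟮y⟯ with hE
  have hyE : y ∈ E := mem_adjoin_simple_self k y
  have hXE : G.X ∈ E := E.algebraMap_mem _
  have hconst : ∀ c : K, algebraMap K Ω c ∈ E := fun c => by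
    rw [IsScalarTower.algebraMap_apply K k Ω]; exact E.algebraMap_mem _
  have hf1E : ∀ z ∈ E, f1 z ∈ E := fun z hz =>
    sum_mem fun j _ => mul_mem (hconst _) (pow_mem hz _)
  set U : Ω := f1 G.X / G.X * y - f1 y with hU
  have hUE : U ∈ E := sub_mem (mul_mem (div_mem (hf1E _ hXE) hXE) hyE) (hf1E _ hyE)
  have hUQ : U ^ Q = D.f0 y - D.f0 G.X * (y / G.X) ^ Q := by
    rw [hU, hQ, D.sub_pow_q, ← hQ, hB' y, mul_pow, div_pow, hB', div_pow]
    have : D.f y = D.f G.X * (y ^ Q / G.X ^ Q) := by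
      rw [mul_div_assoc', eq_div_iff (pow_ne_zero _ hX0)]; exact hmem
    rw [this]
    ring
  have hs : U ^ Q - algebraMap K Ω (D.c 0 * (c - c ^ Q)) * G.X
      - algebraMap K Ω (D.c D.i * (c ^ (D.q ^ D.i) - c ^ Q)) * G.X ^ (D.q ^ D.i)
      = D.f0 u - D.f0 G.X * (u / G.X) ^ Q := by
    have h1 : (y / G.X) ^ Q = algebraMap K Ω c ^ Q + (u / G.X) ^ Q := by
      rw [hQ, ← D.add_pow_q]; congr 1; rw [hyu]; field_simp
    have h2 : D.f0 y = D.f0 (algebraMap K Ω c * G.X) + D.f0 u := by rw [hyu, D.f0_add]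
    rw [hUQ, h1, h2]
    simp only [map_mul, map_sub, map_pow]
    unfold Dat.f0
    ring
  have hf0u : L.v (D.f0 u) ≤ 1 := by
    unfold Dat.f0
    refine L.v_add_le ((L.v_const_mul_le _ _).trans hu1) ((L.v_const_mul_le _ _).trans ?_)
    rw [map_pow]
    exact pow_le_one₀ (L.v.nonneg _) hu1
  have hf0X : L.v (D.f0 G.X) ≤ L.v G.X ^ Q := by
    unfold Dat.f0
    refine L.v_add_le ((L.v_const_mul_le _ _).trans ?_) ((L.v_const_mul_le _ _).trans ?_)
    · exact le_self_pow₀ hX1.le (D.qpow_ne _)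
    · rw [map_pow]
      exact pow_le_pow_right₀ hX1.le (D.qpow_le D.hit.le)
  have hs1 : L.v (D.f0 u - D.f0 G.X * (u / G.X) ^ Q) ≤ 1 := by
    refine L.v_sub_le' hf0u ?_
    rw [map_mul, map_pow, map_div₀, div_pow, mul_div_assoc', div_le_one (by positivity)]
    calc _ ≤ L.v G.X ^ Q * 1 := by
          gcongr
          exact pow_le_one₀ (L.v.nonneg _) hu1
      _ = _ := mul_one _
  rw [← hs] at hs1
  have hb : D.c 0 * (c - c ^ Q) ≠ 0 := mul_ne_zero D.c0 (sub_ne_zero.2 (Ne.symm hcQ))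
  obtain ⟨Z, hZE, hZ⟩ := wild_iter D L E G.X U hXE hUE _ _ hb hs1 D.t le_rfl
  have hvZ : L.v (Z ^ Q) = L.v G.X := L.v_eq_of_sub_lt (hZ.trans_lt hX1)
  have hoZ := L.o_congr hvZ
  rw [L.o_pow, G.oXI hx] at hoZ
  obtain ⟨j, hj⟩ := L.o_mul_deg (k := k) Z
  have h1 : Q ∣ (minpoly k Z).natDegree := by
    have : ((minpoly k Z).natDegree : ℝ) = -(Q * j) := by
      rw [← hj, ← mul_assoc, hoZ]; ring
    have : ((minpoly k Z).natDegree : ℤ) = Q * (-j) := by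
      have h : ((minpoly k Z).natDegree : ℤ) = -(Q * j) := by exact_mod_cast this
      rw [h]; ring
    have : (Q : ℤ) ∣ (minpoly k Z).natDegree := ⟨_, this⟩
    exact_mod_cast this
  refine h1.trans ?_
  have hyint : IsIntegral k y := Algebra.IsIntegral.isIntegral y
  rw [← adjoin.finrank hyint]
  have := minpoly_eq (K := k) (⟨Z, hZE⟩ : E)
  change minpoly k (⟨Z, hZE⟩ : E) = minpoly k Z at this
  rw [← this]
  refine minpoly.degree_dvd ?_
  exact (isIntegral_algebraMap_iff (algebraMap E Ω).injective).1 (Algebra.IsIntegral.isIntegral Z)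

theorem fullI (hx : G.x = L.T⁻¹) {y u : Ω} (hy : y ∈ G.S) {c : K} (hc : c ^ (D.q ^ D.m) = c)
    (hyc : L.v (y - algebraMap K Ω c * G.X) < L.v G.X) (hcQ : c ^ (D.q ^ D.t) ≠ c)
    (hu : u ∈ G.WI) : y + u ∈ G.S := by
  classical
  have hcard : (G.WI.image (fun u => y + u)).card = D.q ^ D.t := by
    rw [Finset.card_image_of_injective _ (add_right_injective y), G.card_WI hx]
  have := G.full hy (G.WI.image (fun u => y + u)) ?_ ?_
  · exact this (Finset.mem_image_of_mem _ hu)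
  · rw [hcard]
    exact G.wild_dvd hx (G.V_S hy) hc hyc hcQ
  · intro σ
    refine Finset.mem_image.2 ⟨σ y - y, (G.mem_WI _).2 ⟨?_, ?_⟩, by ring⟩
    · exact G.V_sub (G.V_S (G.conjS σ y hy)) (G.V_S hy)
    · have h1 := L.v_sigma σ (y - algebraMap K Ω c * G.X)
      have h2 : σ G.X = G.X := σ.commutes _
      rw [map_sub, map_mul, sigma_const, h2] at h1
      have := L.v_sub_lt (h1 ▸ hyc) hyc
      simpa using this

/-- the residues in the fixed field -/
noncomputable def _root_.Dat.Lam (D : Dat K) : Finset K :=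
  open Classical in (Polynomial.X ^ (D.q ^ (Nat.gcd D.m D.t)) - Polynomial.X : Polynomial K).roots.toFinset

theorem mem_Lam (c : K) : c ∈ D.Lam ↔ c ^ (D.q ^ (Nat.gcd D.m D.t)) = c := by
  classical
  unfold Dat.Lam
  have hg : 0 < Nat.gcd D.m D.t := Nat.gcd_pos_of_pos_right _ (by have := D.ht; omega)
  have h1 : 1 < D.q ^ (Nat.gcd D.m D.t) := by
    have := D.qpow_lt hg; simpa using this
  rw [Multiset.mem_toFinset, Polynomial.mem_roots']
  simp only [Polynomial.IsRoot.def, Polynomial.eval_sub, Polynomial.eval_pow, Polynomial.eval_X, sub_eq_zero]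
  refine ⟨fun h => h.2, fun h => ⟨?_, h⟩⟩
  exact FiniteField.X_pow_card_sub_X_ne_zero K h1

theorem card_Lam : D.Lam.card ≤ D.q ^ (Nat.gcd D.m D.t) := by
  classical
  unfold Dat.Lam
  have hg : 0 < Nat.gcd D.m D.t := Nat.gcd_pos_of_pos_right _ (by have := D.ht; omega)
  have h1 : 1 < D.q ^ (Nat.gcd D.m D.t) := by
    have := D.qpow_lt hg; simpa using this
  refine (Multiset.toFinset_card_le _).trans ((Polynomial.card_roots' _).trans ?_)
  rw [FiniteField.X_pow_card_sub_X_natDegree_eq K h1]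

theorem mem_Lam_of {c : K} (h1 : c ^ (D.q ^ D.m) = c) (h2 : c ^ (D.q ^ D.t) = c) : c ∈ D.Lam := by
  rw [mem_Lam]
  have e : ∀ n, (fun z : K => z ^ D.q)^[n] c = c ^ (D.q ^ n) := by
    intro n
    induction n with
    | zero => simp
    | succ n ih => rw [Function.iterate_succ_apply', ih, ← pow_mul, pow_succ]
  have p1 : Function.IsPeriodicPt (fun z : K => z ^ D.q) D.m c := (e _).trans h1
  have p2 : Function.IsPeriodicPt (fun z : K => z ^ D.q) D.t c := (e _).trans h2
  exact (e _).symm.trans (p1.gcd p2)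

theorem pairsI (hx : G.x = L.T⁻¹) :
    (G.pairs G.WI).card ≤ ∑ c ∈ D.Lam, (G.Sf c).card * (G.Sf' c).card := by
  classical
  have : G.pairs G.WI ⊆ D.Lam.biUnion (fun c => G.Sf c ×ˢ G.Sf' c) := by
    intro z hz
    unfold pairs at hz
    rw [Finset.mem_filter, Finset.mem_product] at hz
    obtain ⟨c, hc, hzc⟩ := G.residueI hx (G.V_S hz.1.1)
    have hzc' : L.v (z.2 - algebraMap K Ω c * G.X) < L.v G.X := by
      have := L.v_sub_lt hzc ((G.mem_WI _).1 hz.2).2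
      simpa using this
    rw [Finset.mem_biUnion]
    refine ⟨c, ?_, ?_⟩
    · refine mem_Lam_of hc ?_
      by_contra hcQ
      have h2 : z.2 - z.1 ∈ G.WI := by
        have := G.WI_sub G.WI_zero hz.2
        simpa using this
      have := G.fullI hx hz.1.1 hc hzc hcQ h2
      rw [add_sub_cancel] at this
      exact G.dSS' _ this hz.1.2
    · exact Finset.mem_product.2 ⟨(G.mem_Sf _ _).2 ⟨hz.1.1, hzc⟩, (G.mem_Sf' _ _).2 ⟨hz.1.2, hzc'⟩⟩
  refine (Finset.card_le_card this).trans (Finset.card_biUnion_le.trans ?_)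
  simp only [Finset.card_product]
  exact le_rfl

/-- special case: `m = 1` all residues are in the fixed field -/
theorem S_sum (hx : G.x = L.T⁻¹) (hm : D.m = 1) : G.S.card = ∑ c ∈ D.Lam, (G.Sf c).card := by
  classical
  rw [← Finset.card_biUnion]
  · congr 1
    ext y
    rw [Finset.mem_biUnion]
    constructor
    · intro hy
      obtain ⟨c, hc, hyc⟩ := G.residueI hx (G.V_S hy)
      refine ⟨c, ?_, (G.mem_Sf _ _).2 ⟨hy, hyc⟩⟩
      rw [mem_Lam, hm, Nat.gcd_one_left]
      rwa [hm] at hc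
    · rintro ⟨c, -, h⟩
      exact ((G.mem_Sf _ _).1 h).1
  · intro c _ d _ hcd
    rw [Function.onFun, Finset.disjoint_left]
    intro y h h'
    refine hcd (L.const_eq_of_lt ?_)
    have h1 := L.v_sub_lt ((G.mem_Sf _ _).1 h').2 ((G.mem_Sf _ _).1 h).2
    have h2 : y - algebraMap K Ω d * G.X - (y - algebraMap K Ω c * G.X) =
      (algebraMap K Ω c - algebraMap K Ω d) * G.X := by ring
    rw [h2, map_mul] at h1
    by_contra! h3
    have := L.v_pos G.X_ne
    nlinarith

theorem Sf_dvd (hx : G.x = L.T⁻¹) (hm : D.m = 1) (ht : D.t = 2) {c : K} (hc : c ^ D.q = c) :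
    D.q + 1 ∣ (G.Sf c).card := by
  classical
  obtain ⟨d, hd⟩ := G.prodS (algebraMap K k c * G.x)
  obtain ⟨j, hj⟩ := L.o_base d
  have hl : algebraMap K Ω c * G.X ∈ G.line := (G.memL _).2 ⟨c, hc, rfl⟩
  have hcX : algebraMap k Ω (algebraMap K k c * G.x) = algebraMap K Ω c * G.X := by
    rw [map_mul, ← IsScalarTower.algebraMap_apply K k Ω]; rfl
  rw [hcX] at hd
  have hne : ∀ y ∈ G.S, algebraMap K Ω c * G.X - y ≠ 0 := by
    intro y hy h
    rw [sub_eq_zero] at h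
    exact G.dSL _ hy (h ▸ hl)
  have hmemW : ∀ y ∈ G.S, (algebraMap K Ω c * G.X - y ∈ G.WI ↔ y ∈ G.Sf c) := by
    intro y hy
    rw [mem_WI, mem_Sf, ← L.v_neg, neg_sub]
    exact ⟨fun h => ⟨hy, h.2⟩, fun h => ⟨G.V_sub (G.V_line hl) (G.V_S hy), h.2⟩⟩
  rw [← hd, L.o_prod _ _ hne] at hj
  have hSf : G.Sf c = G.S.filter (· ∈ G.Sf c) := by
    ext y
    rw [Finset.mem_filter]
    exact ⟨fun h => ⟨((G.mem_Sf _ _).1 h).1, h⟩, fun h => h.2⟩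
  have g0 : ∀ y ∈ G.S.filter (· ∈ G.Sf c), L.o (algebraMap K Ω c * G.X - y) =
      ((D.q : ℝ) ^ D.k - (D.q : ℝ) ^ D.t) / ((D.q : ℝ) ^ D.t - 1) := by
    intro y hy
    rw [Finset.mem_filter] at hy
    exact G.WI_o hx ((hmemW y hy.1).2 hy.2) (hne y hy.1)
  have g1 : ∀ y ∈ G.S.filter (fun y => ¬ (y ∈ G.Sf c)), L.o (algebraMap K Ω c * G.X - y) = -1 := by
    intro y hy
    rw [Finset.mem_filter] at hy
    exact G.nWI_o hx (G.V_sub (G.V_line hl) (G.V_S hy.1)) (fun h => hy.2 ((hmemW y hy.1).1 h))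
  rw [← Finset.sum_filter_add_sum_filter_not G.S (· ∈ G.Sf c),
    Finset.sum_congr rfl g0, Finset.sum_congr rfl g1,
    Finset.sum_const, Finset.sum_const, nsmul_eq_mul, nsmul_eq_mul, ← hSf, qk_eq, hm, ht] at hj
  set b := (G.S.filter (fun y => ¬ (y ∈ G.Sf c))).card
  set s := (G.Sf c).card
  have hq : (2 : ℝ) ≤ D.q := by exact_mod_cast D.two_le_q
  have e1 : ((D.q : ℝ) ^ 2 * (D.q : ℝ) ^ 1 - (D.q : ℝ) ^ 2) / ((D.q : ℝ) ^ 2 - 1) = (D.q : ℝ) ^ 2 / (D.q + 1) := by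
    rw [div_eq_div_iff (by nlinarith) (by linarith)]; ring
  rw [e1] at hj
  have e2 : (s : ℝ) * (D.q : ℝ) ^ 2 = (j + b) * (D.q + 1) := by
    have : (D.q : ℝ) + 1 ≠ 0 := by linarith
    field_simp at hj
    linarith
  have e3 : (s : ℤ) * (D.q : ℤ) ^ 2 = (j + b) * (D.q + 1) := by exact_mod_cast e2
  have e4 : ((D.q + 1 : ℕ) : ℤ) ∣ (s : ℤ) := by
    refine ⟨j + b - s * (D.q - 1), ?_⟩
    push_cast
    linarith
  exact_mod_cast e4

end Pl

theorem numGen (q Q R P a a' α β : ℝ) (hq : 2 ≤ q) (hQ : q ^ 2 ≤ Q) (hR : q ^ 2 ≤ R) (hP : 1 ≤ P)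
    (hPR : 2 * P ≤ R) (hs : a + a' = Q * R - q) (h1 : Q * R - q ≤ 3 * a) (h2 : Q * R - q ≤ 3 * a')
    (hα : 4 * α ≤ (Q - q) ^ 2) (hβ : 4 * β ≤ P * Q ^ 2)
    (h : (Q - 1) * (a * a') = (Q - 1) * α + (Q * R - Q) * β) : False := by
  have hQ4 : 4 ≤ Q := by nlinarith
  have hR4 : 4 ≤ R := by nlinarith
  have hq8 : 8 * q ≤ Q * R := by
    have e1 : q ^ 2 * q ^ 2 ≤ Q * R := mul_le_mul hQ hR (by positivity) (by linarith)
    have e2 : 8 * q ≤ q ^ 2 * q ^ 2 := by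
      have : 8 ≤ q ^ 3 := by nlinarith [sq_nonneg (q - 2)]
      nlinarith
    linarith
  set W := Q * R - q with hW
  have hT : 7 * (Q * R) ≤ 8 * W := by rw [hW]; linarith
  have h9 : 2 * W ^ 2 ≤ 9 * (a * a') := by nlinarith [mul_nonneg (sub_nonneg.2 h1) (sub_nonneg.2 h2)]
  have hQR : 0 ≤ Q * R := by positivity
  have hT2 : 49 * (Q * R) ^ 2 ≤ 64 * W ^ 2 := by nlinarith
  have hQ3 : 0 < Q ^ 3 := by positivity
  -- lower bound
  have l1 : 49 * 3 * (Q ^ 3 * R ^ 2) ≤ 32 * (36 * ((Q - 1) * (a * a'))) := by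
    have e1 : 49 * (Q * R) ^ 2 ≤ 288 * (a * a') := by linarith
    have e3 : (3 * Q) * (49 * (Q * R) ^ 2) ≤ (4 * (Q - 1)) * (288 * (a * a')) :=
      mul_le_mul (by linarith) e1 (by positivity) (by linarith)
    nlinarith
  -- upper bound
  have u1 : 36 * ((Q - 1) * α) ≤ 9 * Q ^ 3 := by
    have e1 : (Q - q) ^ 2 ≤ Q ^ 2 := by
      have : q ≤ Q := by nlinarith
      nlinarith
    have e2 : (Q - 1) * (4 * α) ≤ (Q - 1) * Q ^ 2 := by
      apply mul_le_mul_of_nonneg_left (hα.trans e1); linarith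
    nlinarith
  have u2 : 72 * ((Q * R - Q) * β) ≤ 9 * (Q ^ 3 * (R * (R - 1))) := by
    have hb : 8 * β ≤ R * Q ^ 2 := by nlinarith [sq_nonneg Q]
    have e0 : 0 ≤ Q * R - Q := by nlinarith
    have := mul_le_mul_of_nonneg_left hb e0
    nlinarith
  have key : 147 * R ^ 2 ≤ 32 * (9 + 9 / 2 * (R * (R - 1))) := by
    have : Q ^ 3 * (147 * R ^ 2) ≤ Q ^ 3 * (32 * (9 + 9 / 2 * (R * (R - 1)))) := by nlinarith
    exact le_of_mul_le_mul_left this hQ3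
  nlinarith

/-- the exceptional case, with `N ≤ N'` -/
theorem numSpec1 (q N N' w w' b : ℤ) (hq : 2 ≤ q) (hN : 0 < N) (hNN : N ≤ N')
    (hNs : N + N' = q * (q - 1)) (hw : w + w' = q * (q - 1)) (hb : 0 ≤ b)
    (ha : (q + 1) * N = q ^ 2 * b + w) (h : (q + 1) * (N * N') ≤ w * w') : False := by
  obtain ⟨j, hj⟩ : ∃ j, j = N - q * b := ⟨_, rfl⟩
  have hw1 : w = N + q * j := by rw [hj]; linarith
  have hw2 : w' = N' - q * j := by linarith
  have h2 : q * (N * N') ≤ q * (j * (N' - N) - q * j ^ 2) := by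
    rw [hw1, hw2] at h; nlinarith
  have h3 : N * N' ≤ j * (N' - N) - q * j ^ 2 := le_of_mul_le_mul_left h2 (by linarith)
  have hjN : j ≤ N := by rw [hj]; nlinarith
  have hpos : 0 < N * N' := mul_pos hN (by linarith)
  rcases le_or_gt j 0 with hj0 | hj0
  · nlinarith [mul_nonneg (neg_nonneg.2 hj0) (sub_nonneg.2 hNN), sq_nonneg j]
  · have : j * (N' - N) ≤ N * (N' - N) := mul_le_mul_of_nonneg_right hjN (by linarith)
    nlinarith [sq_nonneg j]

theorem numSpec2 {ι : Type*} (s : Finset ι) (n n' : ι → ℝ) (q : ℝ) (hq : 2 ≤ q) (hs : (s.card : ℝ) ≤ q)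
    (h0 : ∀ i ∈ s, 0 ≤ n i) (h : ∀ i ∈ s, n i + n' i ≤ q - 1) :
    q * ∑ i ∈ s, n i * n' i ≤ (∑ i ∈ s, n i) * (q * (q - 1) - ∑ i ∈ s, n i) := by
  have h1 : ∑ i ∈ s, n i * n' i ≤ (q - 1) * (∑ i ∈ s, n i) - ∑ i ∈ s, n i ^ 2 := by
    rw [Finset.mul_sum, ← Finset.sum_sub_distrib]
    refine Finset.sum_le_sum fun i hi => ?_
    nlinarith [h0 i hi, h i hi]
  have h2 : (∑ i ∈ s, n i) ^ 2 ≤ s.card * ∑ i ∈ s, n i ^ 2 := sq_sum_le_card_mul_sum_sq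
  have h3 : 0 ≤ ∑ i ∈ s, n i ^ 2 := Finset.sum_nonneg fun i _ => sq_nonneg _
  nlinarith

/-- arithmetic of the exponents -/
theorem numExp (t k : ℕ) (ht : 2 ≤ t) (h : (t ∣ k ∧ 3 * t ≤ k) ∨ (¬ t ∣ k ∧ 2 * t - 1 ≤ k)) :
    t < k ∧ ((t = 2 ∧ k - t = 1) ∨ (2 ≤ k - t ∧ Nat.gcd (k - t) t + 1 ≤ k - t)) := by
  have htk : t < k := by
    rcases h with h | h
    · omega
    · rcases Nat.lt_or_ge t k with h' | h'
      · exact h'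
      · exfalso
        have : t = k := by omega
        exact h.1 (this ▸ dvd_rfl)
  refine ⟨htk, ?_⟩
  have hg1 : Nat.gcd (k - t) t ≤ t := Nat.gcd_le_right _ (by omega)
  rcases h with h | h
  · right; omega
  · have hne : Nat.gcd (k - t) t ≠ t := by
      intro he
      have h' := Nat.gcd_dvd_left (k - t) t
      rw [he] at h'
      have := Nat.dvd_add h' (dvd_refl t)
      rw [Nat.sub_add_cancel htk.le] at this
      exact h.1 this
    obtain ⟨d, hd⟩ := Nat.gcd_dvd_right (k - t) t
    have hd2 : 2 ≤ d := by
      by_contra hd2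
      have : d = 0 ∨ d = 1 := by omega
      rcases this with rfl | rfl
      · omega
      · omega
    have hg2 : 2 * Nat.gcd (k - t) t ≤ t := by nlinarith
    by_cases h2 : t = 2
    · subst h2
      have : ¬ 2 ∣ k := h.1
      omega
    · right; omega

section
variable {K : Type} [Field K] [IsAlgClosed K] {D : Dat K} {k Ω : Type} [Field k] [Field Ω] [Algebra K k]
    [Algebra k Ω] [Algebra K Ω] {L : LV K k Ω}
variable [IsAlgClosed Ω] [Algebra.IsAlgebraic k Ω] [IsScalarTower K k Ω]

set_option maxHeartbeats 1600000 in
theorem partB_aux (G0 GI : Pl D L) (hx0 : G0.x = L.T ^ (D.q ^ D.m - 1)) (hxI : GI.x = L.T⁻¹)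
    (a a' : ℕ) (ha0 : G0.S.card = a) (ha0' : G0.S'.card = a') (haI : GI.S.card = a)
    (haI' : GI.S'.card = a') (haa : a + a' + D.q = D.q ^ D.k)
    (h1 : a + a' ≤ 3 * a) (h2 : a + a' ≤ 3 * a') (N : ℝ)
    (hN0 : ∑ z ∈ G0.S ×ˢ G0.S', L.o (z.1 - z.2) = N * L.o G0.X)
    (hNI : ∑ z ∈ GI.S ×ˢ GI.S', L.o (z.1 - z.2) = N * L.o GI.X)
    (hyp : (D.t = 2 ∧ D.m = 1) ∨ (2 ≤ D.m ∧ Nat.gcd D.m D.t + 1 ≤ D.m)) : False := by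
  classical
  have hP0 := G0.pair_sum G0.W0 _ _ (fun y hy hy0 => G0.W0_o hx0 hy hy0)
    (fun y hy hy0 => (G0.nW0_o hx0 hy hy0).2)
  have hPI := GI.pair_sum GI.WI _ _ (fun y hy hy0 => GI.WI_o hxI hy hy0)
    (fun y hy hy0 => GI.nWI_o hxI hy hy0)
  rw [hN0, G0.oX0 hx0, ha0, ha0'] at hP0
  rw [hNI, GI.oXI hxI, haI, haI', Pl.qk_eq] at hPI
  have hα := G0.pairs0 hx0
  have hw := G0.sum_w hx0
  have hβ := GI.pairsI hxI
  set α := (G0.pairs G0.W0).card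
  set β := (GI.pairs GI.WI).card
  set w := (G0.S.filter (· ∈ G0.W0)).card with hwdef
  set w' := (G0.S'.filter (· ∈ G0.W0)).card with hwdef'
  have hQ1 := Pl.one_lt_qt (D := D)
  have hR1 := Pl.one_lt_qm (D := D)
  have hq2 : (2 : ℝ) ≤ D.q := by exact_mod_cast D.two_le_q
  have haaR : (a : ℝ) + a' = (D.q : ℝ) ^ D.t * (D.q : ℝ) ^ D.m - D.q := by
    rw [← Pl.qk_eq]
    have : (a : ℝ) + a' + D.q = (D.q : ℝ) ^ D.k := by exact_mod_cast haa
    linarith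
  have hαR : (α : ℝ) ≤ w * w' := by exact_mod_cast hα
  have hwR : (w : ℝ) + w' + D.q = (D.q : ℝ) ^ D.t := by exact_mod_cast hw
  have h1R : (a : ℝ) + a' ≤ 3 * a := by exact_mod_cast h1
  have h2R : (a : ℝ) + a' ≤ 3 * a' := by exact_mod_cast h2
  set Q : ℝ := (D.q : ℝ) ^ D.t with hQ
  set R : ℝ := (D.q : ℝ) ^ D.m with hR
  have hmain : (Q - 1) * ((a : ℝ) * a') = (Q - 1) * α + (Q * R - Q) * β := by
    have hQ0 : Q ≠ 0 := by linarith
    have hQ10 : Q - 1 ≠ 0 := by linarith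
    have hP0' := congrArg (fun z => Q * z) hP0
    have hPI' := congrArg (fun z => (Q - 1) * z) hPI
    field_simp at hP0' hPI'
    have hX : (Q * R - 1) * ((Q - 1) * ((a : ℝ) * a')) = (Q * R - 1) * ((Q - 1) * α + (Q * R - Q) * β) := by
      linear_combination (Q - 1) * hP0' + (Q * R - Q) * hPI'
    refine mul_left_cancel₀ ?_ hX
    nlinarith
  rcases hyp with ⟨ht, hm⟩ | ⟨hm2, hg⟩
  · -- exceptional case
    have hQq : Q = (D.q : ℝ) ^ 2 := by rw [hQ, ht]
    have hRq : R = D.q := by rw [hR, hm, pow_one]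
    have hlam : ∀ c ∈ D.Lam, c ^ D.q = c := by
      intro c hc
      rw [Pl.mem_Lam, hm, Nat.gcd_one_left, pow_one] at hc
      exact hc
    have hd : ∀ c ∈ D.Lam, ∃ n : ℕ, (GI.Sf c).card = (D.q + 1) * n :=
      fun c hc => GI.Sf_dvd hxI hm ht (hlam c hc)
    have hd' : ∀ c ∈ D.Lam, ∃ n : ℕ, (GI.Sf' c).card = (D.q + 1) * n :=
      fun c hc => GI.swap.Sf_dvd hxI hm ht (hlam c hc)
    choose! n hn using hd
    choose! n' hn' using hd'
    have hS : a = ∑ c ∈ D.Lam, (GI.Sf c).card := by rw [← haI]; exact GI.S_sum hxI hm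
    have hS' : a' = ∑ c ∈ D.Lam, (GI.Sf' c).card := by rw [← haI']; exact GI.swap.S_sum hxI hm
    rw [Finset.sum_congr rfl hn, ← Finset.mul_sum] at hS
    rw [Finset.sum_congr rfl hn', ← Finset.mul_sum] at hS'
    rw [Finset.sum_congr rfl (fun c hc => by rw [hn c hc, hn' c hc])] at hβ
    obtain ⟨NN, hNN⟩ : ∃ NN, NN = ∑ c ∈ D.Lam, n c := ⟨_, rfl⟩
    obtain ⟨NN', hNN'⟩ : ∃ NN, NN = ∑ c ∈ D.Lam, n' c := ⟨_, rfl⟩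
    rw [← hNN] at hS
    rw [← hNN'] at hS'
    have hcard : (D.Lam.card : ℝ) ≤ D.q := by
      have := Pl.card_Lam (D := D)
      rw [hm, Nat.gcd_one_left, pow_one] at this
      exact_mod_cast this
    have hcs := numSpec2 D.Lam (fun c => (n c : ℝ)) (fun c => (n' c : ℝ)) D.q hq2 hcard
      (fun c _ => Nat.cast_nonneg _) (by
        intro c hc
        have := GI.Sf_card_line hxI c (hlam c hc)
        rw [hn c hc, hn' c hc, ht] at this
        have h3 : ((D.q : ℝ) + 1) * n c + (D.q + 1) * n' c + 1 ≤ (D.q : ℝ) ^ 2 := by exact_mod_cast this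
        have h4 : ((D.q : ℝ) + 1) * ((n c : ℝ) + n' c) ≤ (D.q + 1) * (D.q - 1) := by nlinarith
        exact le_of_mul_le_mul_left h4 (by linarith))
    have hNR : (∑ c ∈ D.Lam, (n c : ℝ)) = NN := by rw [hNN]; push_cast; rfl
    rw [hNR] at hcs
    have hβR : (β : ℝ) ≤ (D.q + 1) ^ 2 * ∑ c ∈ D.Lam, (n c : ℝ) * n' c := by
      have : (β : ℝ) ≤ ∑ c ∈ D.Lam, (((D.q + 1) * n c : ℕ) : ℝ) * (((D.q + 1) * n' c : ℕ) : ℝ) := by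
        exact_mod_cast hβ
      refine this.trans (le_of_eq ?_)
      rw [Finset.mul_sum]
      refine Finset.sum_congr rfl fun c _ => ?_
      push_cast
      ring
    have haR : (a : ℝ) = (D.q + 1) * NN := by exact_mod_cast hS
    have haR' : (a' : ℝ) = (D.q + 1) * NN' := by exact_mod_cast hS'
    have hNs : (NN : ℝ) + NN' = D.q * (D.q - 1) := by
      have : ((D.q : ℝ) + 1) * ((NN : ℝ) + NN') = (D.q + 1) * (D.q * (D.q - 1)) := by
        rw [haR, haR', hQq, hRq] at haaR; linear_combination haaR
      exact mul_left_cancel₀ (by linarith) this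
    have hN'' : (D.q : ℝ) * (D.q - 1) - NN = NN' := by linarith
    rw [hN''] at hcs
    have hineq : ((D.q : ℝ) + 1) * ((NN : ℝ) * NN') ≤ w * w' := by
      rw [hQq, hRq, haR, haR'] at hmain
      set q : ℝ := (D.q : ℝ)
      set sn := ∑ c ∈ D.Lam, (n c : ℝ) * n' c
      have e1 : (q + 1) * ((q + 1) * NN * ((q + 1) * NN')) = (q + 1) * α + q ^ 2 * β := by
        refine mul_left_cancel₀ (show q - 1 ≠ 0 by linarith) ?_
        linear_combination hmain
      have e2 : q ^ 2 * (β : ℝ) ≤ (q + 1) ^ 2 * (q * (NN * NN')) := by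
        calc q ^ 2 * (β : ℝ) ≤ q ^ 2 * ((q + 1) ^ 2 * sn) := by gcongr
          _ = (q + 1) ^ 2 * (q * (q * sn)) := by ring
          _ ≤ _ := by gcongr
      have e3 : (q + 1) * ((q + 1) * (NN * NN')) ≤ (q + 1) * (w * w') := by
        have : (q + 1) * (α : ℝ) ≤ (q + 1) * (w * w') := by gcongr
        linarith
      exact le_of_mul_le_mul_left e3 (by linarith)
    have hineqZ : ((D.q : ℤ) + 1) * ((NN : ℤ) * NN') ≤ w * w' := by exact_mod_cast hineq
    have hNsZ : (NN : ℤ) + NN' = D.q * (D.q - 1) := by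
      have : ((NN : ℤ) + NN' : ℝ) = ((D.q * (D.q - 1) : ℤ) : ℝ) := by push_cast; exact hNs
      exact_mod_cast this
    have hwZ : (w : ℤ) + w' = D.q * (D.q - 1) := by
      rw [ht] at hw
      have : (w : ℤ) + w' + D.q = (D.q : ℤ) ^ 2 := by exact_mod_cast hw
      linarith
    have hqZ : (2 : ℤ) ≤ D.q := by exact_mod_cast D.two_le_q
    have hTpos : 0 < a + a' := by
      have := D.qpow_lt (show 1 < D.k by have := D.htk; omega)
      rw [pow_one] at this; omega
    have hNpos : 0 < NN := by
      rcases Nat.eq_zero_or_pos NN with h | h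
      · rw [h, mul_zero] at hS; omega
      · exact h
    have hNpos' : 0 < NN' := by
      rcases Nat.eq_zero_or_pos NN' with h | h
      · rw [h, mul_zero] at hS'; omega
      · exact h
    obtain ⟨b, hb⟩ := G0.z_dvd hx0 w _ hwdef rfl
    obtain ⟨b', hb'⟩ := G0.swap.z_dvd hx0 w' _ hwdef' rfl
    have hab : a = D.q ^ 2 * b + w := by
      rw [← ha0, ← Finset.card_filter_add_card_filter_not (s := G0.S) (· ∈ G0.W0), hb, ht, add_comm]
    have hab' : a' = D.q ^ 2 * b' + w' := by
      have e : G0.swap.S = G0.S' := rfl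
      have e' : G0.swap.W0 = G0.W0 := rfl
      rw [e, e'] at hb'
      rw [← ha0', ← Finset.card_filter_add_card_filter_not (s := G0.S') (· ∈ G0.W0), hb', ht, add_comm]
    rcases le_total NN NN' with hle | hle
    · refine numSpec1 D.q NN NN' w w' b hqZ (by exact_mod_cast hNpos) (by exact_mod_cast hle) hNsZ hwZ
        (Int.natCast_nonneg _) ?_ hineqZ
      rw [hS] at hab
      exact_mod_cast hab
    · refine numSpec1 D.q NN' NN w' w b' hqZ (by exact_mod_cast hNpos') (by exact_mod_cast hle)
        (by rw [add_comm]; exact hNsZ) (by rw [add_comm]; exact hwZ)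
        (Int.natCast_nonneg _) ?_ (by rw [mul_comm (NN' : ℤ), mul_comm (w' : ℤ)]; exact hineqZ)
      rw [hS'] at hab'
      exact_mod_cast hab'
  · -- generic case
    refine numGen D.q Q R ((D.q : ℝ) ^ (Nat.gcd D.m D.t)) a a' α β hq2 ?_ ?_ ?_ ?_ haaR ?_ ?_ ?_ ?_ hmain
    · exact pow_le_pow_right₀ (by linarith) D.ht
    · exact pow_le_pow_right₀ (by linarith) hm2
    · exact one_le_pow₀ (by linarith)
    · calc 2 * (D.q : ℝ) ^ (Nat.gcd D.m D.t) ≤ D.q * (D.q : ℝ) ^ (Nat.gcd D.m D.t) := by gcongr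
        _ = (D.q : ℝ) ^ (Nat.gcd D.m D.t + 1) := (pow_succ' _ _).symm
        _ ≤ R := pow_le_pow_right₀ (by linarith) hg
    · linarith
    · linarith
    · have : (w : ℝ) + w' = Q - D.q := by linarith
      rw [← this]
      nlinarith [sq_nonneg ((w : ℝ) - w')]
    · have e1 : ∀ c ∈ D.Lam, 4 * (((GI.Sf c).card * (GI.Sf' c).card : ℕ) : ℝ) ≤ Q ^ 2 := by
        intro c _
        have : ((GI.Sf c).card : ℝ) + (GI.Sf' c).card ≤ Q := by
          have := GI.Sf_card hxI c
          rw [hQ]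
          exact_mod_cast this
        push_cast
        nlinarith [sq_nonneg (((GI.Sf c).card : ℝ) - (GI.Sf' c).card), Nat.cast_nonneg (α := ℝ) (GI.Sf c).card,
          Nat.cast_nonneg (α := ℝ) (GI.Sf' c).card]
      have e2 : (β : ℝ) ≤ ∑ c ∈ D.Lam, (((GI.Sf c).card * (GI.Sf' c).card : ℕ) : ℝ) := by exact_mod_cast hβ
      have e3 : 4 * ∑ c ∈ D.Lam, (((GI.Sf c).card * (GI.Sf' c).card : ℕ) : ℝ) ≤ D.Lam.card * Q ^ 2 := by
        rw [Finset.mul_sum, ← nsmul_eq_mul]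
        exact Finset.sum_le_card_nsmul _ _ _ e1
      have e4 : (D.Lam.card : ℝ) ≤ (D.q : ℝ) ^ (Nat.gcd D.m D.t) := by
        exact_mod_cast Pl.card_Lam (D := D)
      have e5 : (D.Lam.card : ℝ) * Q ^ 2 ≤ (D.q : ℝ) ^ (Nat.gcd D.m D.t) * Q ^ 2 := by gcongr
      linarith

end

open Polynomial in
/-- the line factor -/
noncomputable def lineP (q : ℕ) {R : Type} [CommRing R] (x : R) : R[X] := C (x ^ q) * X - C x * X ^ q

open Polynomial in
/-- the total polynomial -/
noncomputable def Dat.H {K : Type} [Field K] (D : Dat K) {R : Type} [CommRing R] [Algebra K R] (x : R) : R[X] :=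
  C (∑ j ∈ Finset.range (D.k + 1), algebraMap K R (D.c j) * x ^ (D.q ^ j)) * X ^ (D.q ^ D.t)
    - (∑ j ∈ Finset.range (D.k + 1), C (algebraMap K R (D.c j)) * X ^ (D.q ^ j)) * C (x ^ (D.q ^ D.t))

section
open Polynomial
variable {K : Type} [Field K] (D : Dat K)

theorem lineP_map {R S : Type} [CommRing R] [CommRing S] (φ : R →+* S) (q : ℕ) (x : R) :
    (lineP q x).map φ = lineP q (φ x) := by
  simp [lineP]

theorem Dat.H_map {R S : Type} [CommRing R] [CommRing S] [Algebra K R] [Algebra K S] (φ : R →ₐ[K] S) (x : R) :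
    (D.H x).map (φ : R →+* S) = D.H (φ x) := by
  simp [Dat.H, Polynomial.map_sum]

theorem lineP_deg {q : ℕ} (hq : 2 ≤ q) {R : Type} [CommRing R] [IsDomain R] (x : R) (hx : x ≠ 0) :
    (lineP q x).natDegree = q ∧ (lineP q x).leadingCoeff = -x := by
  have hc : (lineP q x).coeff q = -x := by
    have h1 : (1 : ℕ) ≠ q := by omega
    simp only [lineP, coeff_sub, coeff_C_mul, coeff_X, coeff_X_pow, h1, if_false, if_true, mul_zero, mul_one, zero_sub]
  have hd : (lineP q x).natDegree = q := by
    refine natDegree_eq_of_le_of_coeff_ne_zero ?_ (by rw [hc]; simpa using hx)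
    unfold lineP
    refine (natDegree_sub_le _ _).trans (max_le ?_ ?_)
    · exact (natDegree_C_mul_le _ _).trans (natDegree_X_le.trans (by omega))
    · exact (natDegree_C_mul_le _ _).trans (natDegree_X_pow_le _)
  exact ⟨hd, by rw [leadingCoeff, hd, hc]⟩

theorem Dat.H_deg {R : Type} [CommRing R] [IsDomain R] [Algebra K R] (x : R) (hx : x ≠ 0) :
    (D.H x).natDegree = D.q ^ D.k ∧ (D.H x).leadingCoeff = - x ^ (D.q ^ D.t) := by
  have hc : (D.H x).coeff (D.q ^ D.k) = - x ^ (D.q ^ D.t) := by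
    have h1 := (D.qpow_lt D.htk).ne'
    simp only [Dat.H, coeff_sub, coeff_C_mul, coeff_X_pow, coeff_mul_C, finsetSum_coeff, h1, if_false, mul_zero]
    rw [Finset.sum_range_succ, Finset.sum_eq_zero]
    · simp [D.ck]
    · intro j hj
      rw [if_neg (D.qpow_lt (Finset.mem_range.1 hj)).ne', mul_zero]
  have hd : (D.H x).natDegree = D.q ^ D.k := by
    refine natDegree_eq_of_le_of_coeff_ne_zero ?_ (by rw [hc]; simpa using fun h => absurd h hx)
    unfold Dat.H
    refine (natDegree_sub_le _ _).trans (max_le ?_ ?_)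
    · exact (natDegree_C_mul_le _ _).trans ((natDegree_X_pow_le _).trans (D.qpow_le D.htk.le))
    · refine (natDegree_mul_C_le _ _).trans ?_
      refine natDegree_sum_le_of_forall_le _ _ fun j hj => ?_
      refine (natDegree_C_mul_le _ _).trans ((natDegree_X_pow_le _).trans (D.qpow_le ?_))
      have := Finset.mem_range.1 hj
      omega
  exact ⟨hd, by rw [leadingCoeff, hd, hc]⟩

theorem Dat.H_deriv {R : Type} [Field R] [Algebra K R] (x : R) :
    derivative (D.H x) = C (- (algebraMap K R (D.c 0) * x ^ (D.q ^ D.t))) := by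
  haveI := D.charP R
  have h0 : ∀ j, j ≠ 0 → ((D.q ^ j : ℕ) : R) = 0 := by
    intro j hj
    rw [CharP.cast_eq_zero_iff R D.p, D.hq]
    exact dvd_pow (dvd_pow_self _ D.he.ne') hj
  have h2 : derivative (X ^ (D.q ^ D.t) : R[X]) = 0 := by
    rw [derivative_X_pow, h0 _ (by have := D.ht; omega)]; simp
  have h3 : derivative (∑ j ∈ Finset.range (D.k + 1), C (algebraMap K R (D.c j)) * (X : R[X]) ^ (D.q ^ j)) =
      C (algebraMap K R (D.c 0)) := by
    rw [derivative_sum, Finset.sum_range_succ', Finset.sum_eq_zero]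
    · simp
    · intro j _
      rw [derivative_C_mul, derivative_X_pow, h0 _ (by omega)]; simp
  unfold Dat.H
  rw [derivative_sub, derivative_C_mul, h2, derivative_mul, h3, derivative_C]
  simp

theorem Dat.H_sep {R : Type} [Field R] [Algebra K R] (x : R) (hx : x ≠ 0) : (D.H x).Separable := by
  rw [separable_def, D.H_deriv]
  suffices h : IsUnit (C (-((algebraMap K R) (D.c 0) * x ^ D.q ^ D.t))) by
    obtain ⟨u, hu⟩ := h
    exact ⟨0, (u⁻¹ : R[X]ˣ), by rw [← hu]; simp⟩
  rw [Polynomial.isUnit_C, isUnit_iff_ne_zero, neg_ne_zero]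
  exact mul_ne_zero (by simpa using D.c0) (pow_ne_zero _ hx)

theorem Dat.H_eval {R : Type} [Field R] [Algebra K R] (x y : R) :
    (D.H x).eval y = D.f x * y ^ (D.q ^ D.t) - D.f y * x ^ (D.q ^ D.t) := by
  simp [Dat.H, Dat.f, eval_finsetSum]

/-- a nontrivial factorisation of the curve over an algebraically closed field -/
structure Fac where
  P : K[X][X]
  P' : K[X][X]
  id : P * P' * lineP D.q (X : K[X]) = D.H (X : K[X])

end

namespace Fac
open Polynomial
variable {K : Type} [Field K] {D : Dat K} (W : Fac D)

/-- specialisation -/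
noncomputable def sp {R : Type} [CommRing R] [Algebra K R] (x : R) (P : K[X][X]) : R[X] :=
  P.map ((aeval x : K[X] →ₐ[K] R) : K[X] →+* R)

theorem sp_id {R : Type} [CommRing R] [Algebra K R] (x : R) :
    sp x W.P * sp x W.P' * lineP D.q x = D.H x := by
  have h := congrArg (Polynomial.map ((aeval x : K[X] →ₐ[K] R) : K[X] →+* R)) W.id
  rw [D.H_map, Polynomial.map_mul, Polynomial.map_mul, lineP_map] at h
  simpa [sp] using h

theorem sp_map {R S : Type} [CommRing R] [CommRing S] [Algebra K R] [Algebra K S] (φ : R →ₐ[K] S) (x : R)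
    (P : K[X][X]) : (sp x P).map (φ : R →+* S) = sp (φ x) P := by
  unfold sp
  rw [Polynomial.map_map]
  congr 1
  ext <;> simp

theorem lc_id : W.P.leadingCoeff * W.P'.leadingCoeff * X = X ^ (D.q ^ D.t) := by
  have h := congrArg leadingCoeff W.id
  rw [leadingCoeff_mul, leadingCoeff_mul, (lineP_deg D.two_le_q _ X_ne_zero).2, (D.H_deg _ X_ne_zero).2] at h
  linear_combination -h

theorem dvd_X {g : K[X]} {n : ℕ} (h : g ∣ X ^ n) : ∃ c : K, c ≠ 0 ∧ ∃ i : ℕ, g = C c * X ^ i := by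
  obtain ⟨i, _, u, hu⟩ := (dvd_prime_pow prime_X n).1 h
  obtain ⟨c, hc, hcu⟩ := Polynomial.isUnit_iff.1 (u⁻¹).isUnit
  refine ⟨c, hc.ne_zero, i, ?_⟩
  rw [← hu, hcu]
  calc g = g * (u * (u⁻¹ : K[X]ˣ) : K[X]) := by simp
    _ = _ := by ring

/-- interchange -/
def swap : Fac D where
  P := W.P'
  P' := W.P
  id := by rw [mul_comm W.P']; exact W.id

theorem lc : ∃ c : K, c ≠ 0 ∧ ∃ i : ℕ, W.P.leadingCoeff = C c * X ^ i :=
  dvd_X (n := D.q ^ D.t) ⟨W.P'.leadingCoeff * X, by rw [← W.lc_id]; ring⟩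

theorem deg : W.P.natDegree + W.P'.natDegree + D.q = D.q ^ D.k := by
  have h0 : W.P ≠ 0 ∧ W.P' ≠ 0 ∧ lineP D.q (X : K[X]) ≠ 0 := by
    have : D.H (X : K[X]) ≠ 0 := by
      intro h
      have := (D.H_deg (X : K[X]) X_ne_zero).1
      rw [h, natDegree_zero] at this
      exact D.qpow_ne _ this.symm
    rw [← W.id] at this
    exact ⟨left_ne_zero_of_mul (left_ne_zero_of_mul this), right_ne_zero_of_mul (left_ne_zero_of_mul this),
      right_ne_zero_of_mul this⟩
  have h := congrArg natDegree W.id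
  rw [natDegree_mul (mul_ne_zero h0.1 h0.2.1) h0.2.2, natDegree_mul h0.1 h0.2.1,
    (lineP_deg D.two_le_q _ X_ne_zero).1, (D.H_deg _ X_ne_zero).1] at h
  exact h

theorem sp_lc_ne {R : Type} [Field R] [Algebra K R] {x : R} (hx : x ≠ 0) : aeval x W.P.leadingCoeff ≠ 0 := by
  obtain ⟨c, hc, i, h⟩ := W.lc
  rw [h]
  simp [hc, hx]

theorem sp_deg {R : Type} [Field R] [Algebra K R] {x : R} (hx : x ≠ 0) :
    (sp x W.P).natDegree = W.P.natDegree :=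
  natDegree_map_of_leadingCoeff_ne_zero _ (W.sp_lc_ne hx)

theorem sp_lc {R : Type} [Field R] [Algebra K R] {x : R} (hx : x ≠ 0) :
    (sp x W.P).leadingCoeff = aeval x W.P.leadingCoeff :=
  leadingCoeff_map_of_leadingCoeff_ne_zero _ (W.sp_lc_ne hx)

theorem sp_ne {R : Type} [Field R] [Algebra K R] {x : R} (hx : x ≠ 0) : sp x W.P ≠ 0 := by
  rw [← leadingCoeff_ne_zero, W.sp_lc hx]
  exact W.sp_lc_ne hx

theorem sp_deg' {R : Type} [Field R] [Algebra K R] {x : R} (hx : x ≠ 0) :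
    (sp x W.P').natDegree = W.P'.natDegree := W.swap.sp_deg hx

theorem res [IsAlgClosed K] : ∃ c : K, c ≠ 0 ∧ ∃ i : ℕ, resultant W.P W.P' = C c * X ^ i := by
  have hne : ∀ x : K, x ≠ 0 → (resultant W.P W.P').eval x ≠ 0 := by
    intro x hx
    have h1 : (resultant W.P W.P').eval x = resultant (sp x W.P) (sp x W.P') := by
      rw [W.sp_deg hx, W.sp_deg' hx]
      unfold sp
      rw [resultant_map_map]
      simp
    rw [h1]
    refine resultant_ne_zero _ _ ?_
    have := D.H_sep x hx
    rw [← W.sp_id] at this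
    exact this.of_mul_left.isCoprime
  have h0 : resultant W.P W.P' ≠ 0 := by
    intro h
    exact hne 1 one_ne_zero (by rw [h, eval_zero])
  obtain ⟨g, hg, hg0⟩ := exists_eq_pow_rootMultiplicity_mul_and_not_dvd _ h0 0
  rw [map_zero, sub_zero] at hg hg0
  have hdeg : g.degree = 0 := by
    by_contra hd
    obtain ⟨x, hx⟩ := IsAlgClosed.exists_root g hd
    by_cases hx0 : x = 0
    · subst hx0
      rw [X_dvd_iff, coeff_zero_eq_eval_zero] at hg0
      exact hg0 hx
    · refine hne x hx0 ?_
      rw [hg, eval_mul, hx.eq_zero, mul_zero]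
  refine ⟨g.coeff 0, ?_, rootMultiplicity 0 (resultant W.P W.P'), ?_⟩
  · rwa [X_dvd_iff] at hg0
  · conv_lhs => rw [hg]
    rw [mul_comm, ← eq_C_of_degree_eq_zero hdeg]

end Fac

namespace Fac
open Polynomial
variable {K : Type} [Field K] {D : Dat K} (W : Fac D)
variable {k Ω : Type} [Field k] [Field Ω] [Algebra K k]
    [Algebra k Ω] [Algebra K Ω] [IsAlgClosed Ω] [IsScalarTower K k Ω]

theorem sp_base (x : k) (P : K[X][X]) : sp (algebraMap k Ω x) P = (sp x P).map (algebraMap k Ω) :=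
  (sp_map (IsScalarTower.toAlgHom K k Ω) x P).symm

theorem H_base (x : k) : D.H (algebraMap k Ω x) = (D.H x).map (algebraMap k Ω) :=
  (D.H_map (IsScalarTower.toAlgHom K k Ω) x).symm

variable (Ω) in
/-- roots of a polynomial over the base field -/
noncomputable def rts (g : k[X]) : Finset Ω := by
  classical exact (g.map (algebraMap k Ω)).roots.toFinset

theorem mem_rts {g : k[X]} (hg : g ≠ 0) (y : Ω) : y ∈ rts Ω g ↔ aeval y g = 0 := by
  classical
  unfold rts
  rw [Multiset.mem_toFinset, mem_roots (map_ne_zero hg), IsRoot.def, eval_map_algebraMap]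

theorem rts_val {g : k[X]} (hs : g.Separable) : (rts Ω g).val = (g.map (algebraMap k Ω)).roots := by
  classical
  unfold rts
  rw [Multiset.toFinset_val, Multiset.dedup_eq_self]
  exact nodup_roots hs.map

theorem card_rts {g : k[X]} (hs : g.Separable) : (rts Ω g).card = g.natDegree := by
  rw [Finset.card, rts_val hs, ← (IsAlgClosed.splits _).natDegree_eq_card_roots, natDegree_map]

theorem prod_rts {g : k[X]} (hs : g.Separable) (y : Ω) :
    aeval y g = algebraMap k Ω g.leadingCoeff * ∏ z ∈ rts Ω g, (y - z) := by
  rw [← eval_map_algebraMap, (IsAlgClosed.splits (g.map (algebraMap k Ω))).eval_eq_prod_roots, ← rts_val hs,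
    leadingCoeff_map]
  rfl

theorem prod_rts' {g : k[X]} (hg : g ≠ 0) (hs : g.Separable) (b : k) :
    ∃ d : k, ∏ y ∈ rts Ω g, (algebraMap k Ω b - y) = algebraMap k Ω d := by
  refine ⟨g.eval b / g.leadingCoeff, ?_⟩
  have h := prod_rts (Ω := Ω) hs (algebraMap k Ω b)
  rw [aeval_algebraMap_apply, coe_aeval_eq_eval] at h
  have : algebraMap k Ω g.leadingCoeff ≠ 0 := by simpa using hg
  rw [map_div₀, h, mul_div_cancel_left₀ _ this]

theorem conj_rts {g : k[X]} (hg : g ≠ 0) (σ : Ω ≃ₐ[k] Ω) (y : Ω) (hy : y ∈ rts Ω g) : σ y ∈ rts Ω g := by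
  rw [mem_rts hg] at hy ⊢
  have := aeval_algHom_apply (σ : Ω →ₐ[k] Ω) y g
  rw [hy, map_zero] at this
  exact this

theorem fix_const [IsAlgClosed K] (z : Ω) (hz : z ^ D.q = z) : ∃ c : K, c ^ D.q = c ∧ algebraMap K Ω c = z := by
  have h0 : (X ^ D.q - X : K[X]) ≠ 0 := by
    intro h
    have := congrArg (fun g => coeff g 1) h
    have h1 : 1 ≠ D.q := by have := D.two_le_q; omega
    simp [coeff_X_pow, h1] at this
  obtain ⟨c, hc⟩ := (IsAlgClosed.splits (X ^ D.q - X : K[X])).mem_range_of_isRoot h0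
    (i := algebraMap K Ω) (x := z) (by simp [hz])
  refine ⟨c, (algebraMap K Ω).injective ?_, hc⟩
  rw [map_pow, hc, hz]

/-- the local data -/
noncomputable def place [IsAlgClosed K] (L : LV K k Ω) (x : k) (hx : x ≠ 0) : Pl D L := by
  classical
  have hX : algebraMap k Ω x ≠ 0 := by simpa using hx
  have hsep : (sp x W.P * sp x W.P' * lineP D.q x).Separable := by
    rw [W.sp_id]; exact D.H_sep x hx
  have hne : sp x W.P ≠ 0 := W.sp_ne hx
  have hne' : sp x W.P' ≠ 0 := W.swap.sp_ne hx
  have hneL : lineP D.q x ≠ 0 := by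
    rw [← leadingCoeff_ne_zero, (lineP_deg D.two_le_q x hx).2]; simpa using hx
  have hneH : D.H x ≠ 0 := by rw [← W.sp_id]; exact mul_ne_zero (mul_ne_zero hne hne') hneL
  have hdisj : ∀ {g g' : k[X]}, g ≠ 0 → g' ≠ 0 → IsCoprime g g' → ∀ y, y ∈ rts Ω g → y ∉ rts Ω g' := by
    intro g g' hg hg' hc y hy hy'
    rw [mem_rts hg] at hy
    rw [mem_rts hg'] at hy'
    obtain ⟨a, b, hab⟩ := hc
    have := congrArg (aeval y) hab
    simp [hy, hy'] at this
  exact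
  { x := x
    x_ne := hx
    V := rts Ω (D.H x)
    S := rts Ω (sp x W.P)
    S' := rts Ω (sp x W.P')
    line := rts Ω (lineP D.q x)
    memV := by
      intro y
      rw [mem_rts hneH, ← eval_map_algebraMap, ← H_base, D.H_eval, sub_eq_zero, eq_comm]
    memL := by
      intro y
      rw [mem_rts hneL, ← eval_map_algebraMap, lineP_map]
      simp only [lineP, eval_sub, eval_mul, eval_C, eval_X, eval_pow]
      constructor
      · intro h
        obtain ⟨c, hc, hc'⟩ := fix_const (K := K) (D := D) (y / algebraMap k Ω x) (by
          rw [div_pow, div_eq_div_iff (pow_ne_zero _ hX) hX]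
          linear_combination -h)
        exact ⟨c, hc, by rw [hc', div_mul_cancel₀ _ hX]⟩
      · rintro ⟨c, hc, rfl⟩
        rw [mul_pow, ← map_pow (algebraMap K Ω), hc]
        ring
    cover := by
      intro y
      rw [mem_rts hneH, mem_rts hne, mem_rts hne', mem_rts hneL, ← W.sp_id, map_mul, map_mul, mul_eq_zero,
        mul_eq_zero, or_assoc]
    dSS' := hdisj hne hne' hsep.of_mul_left.isCoprime
    dSL := hdisj hne hneL (IsCoprime.of_mul_left_left hsep.isCoprime)
    dSL' := hdisj hne' hneL (IsCoprime.of_mul_left_right hsep.isCoprime)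
    cardV := by rw [card_rts (D.H_sep x hx), (D.H_deg x hx).1]
    cardL := by rw [card_rts hsep.of_mul_right, (lineP_deg D.two_le_q x hx).1]
    prodV := by
      have hs := D.H_sep x hx
      have h0 : (0 : Ω) ∈ rts Ω (D.H x) := by
        rw [mem_rts hneH, ← eval_map_algebraMap, ← H_base, D.H_eval, D.f_zero, zero_pow (D.qpow_ne _)]
        ring
      rw [← Finset.add_sum_erase _ _ h0]
      have ho0 : L.o (0 : Ω) = 0 := by simp [LV.o]
      rw [ho0, zero_add]
      have hpoly : (D.H x).map (algebraMap k Ω) = C (algebraMap k Ω (D.H x).leadingCoeff) *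
          (X * ∏ z ∈ (rts Ω (D.H x)).erase 0, (X - C z)) := by
        conv_lhs => rw [(IsAlgClosed.splits ((D.H x).map (algebraMap k Ω))).eq_prod_roots, ← rts_val hs,
          leadingCoeff_map]
        congr 1
        have := Finset.mul_prod_erase (rts Ω (D.H x)) (fun z => X - C z) h0
        rw [map_zero, sub_zero] at this
        rw [this]
        rfl
      have hc1 : ((D.H x).map (algebraMap k Ω)).coeff 1 =
          - (algebraMap K Ω (D.c 0) * (algebraMap k Ω x) ^ (D.q ^ D.t)) := by
        have := congrArg (fun g => coeff g 0) (D.H_deriv (algebraMap k Ω x))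
        simp only [coeff_derivative, coeff_C_zero] at this
        rw [← H_base]
        simpa using this
      rw [hpoly, coeff_C_mul, coeff_X_mul, (D.H_deg x hx).2, coeff_zero_eq_eval_zero, eval_prod] at hc1
      simp only [eval_sub, eval_X, eval_C, zero_sub, map_neg, map_pow] at hc1
      have hc2 : ∏ z ∈ (rts Ω (D.H x)).erase 0, (-z) = algebraMap K Ω (D.c 0) := by
        refine mul_left_cancel₀ (pow_ne_zero (D.q ^ D.t) hX) ?_
        linear_combination -hc1
      have hc3 := congrArg L.o hc2
      rw [L.o_const, L.o_prod] at hc3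
      · rw [← hc3]
        exact Finset.sum_congr rfl fun z _ => (L.o_neg z).symm
      · intro z hz
        exact neg_ne_zero.2 (Finset.ne_of_mem_erase hz)
    conjS := fun σ y hy => conj_rts hne σ y hy
    conjS' := fun σ y hy => conj_rts hne' σ y hy
    sep := by
      intro y hy
      rw [mem_rts hneH] at hy
      exact (D.H_sep x hx).of_dvd (minpoly.dvd k y hy)
    prodS := prod_rts' hne hsep.of_mul_left.of_mul_left
    prodS' := prod_rts' hne' hsep.of_mul_left.of_mul_right }

theorem place_card [IsAlgClosed K] (L : LV K k Ω) (x : k) (hx : x ≠ 0) :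
    (W.place L x hx).S.card = W.P.natDegree ∧ (W.place L x hx).S'.card = W.P'.natDegree := by
  have hsep : (sp x W.P * sp x W.P' * lineP D.q x).Separable := by
    rw [W.sp_id]; exact D.H_sep x hx
  exact ⟨(card_rts hsep.of_mul_left.of_mul_left).trans (W.sp_deg hx),
    (card_rts hsep.of_mul_left.of_mul_right).trans (W.sp_deg' hx)⟩

theorem o_monomial (L : LV K k Ω) (x : k) (hx : x ≠ 0) (c : K) (hc : c ≠ 0) (i : ℕ) :
    L.o (algebraMap k Ω (aeval x (C c * X ^ i : K[X]))) = i * L.o (algebraMap k Ω x) := by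
  have hX : algebraMap k Ω x ≠ 0 := by simpa using hx
  rw [map_mul, aeval_C, map_pow, aeval_X, map_mul, ← IsScalarTower.algebraMap_apply, map_pow, L.o_mul, L.o_const,
    L.o_pow, zero_add]
  · simpa using hc
  · exact pow_ne_zero _ hX

theorem place_N [IsAlgClosed K] : ∃ N : ℝ, ∀ (L : LV K k Ω) (x : k) (hx : x ≠ 0),
    ∑ z ∈ (W.place L x hx).S ×ˢ (W.place L x hx).S', L.o (z.1 - z.2) = N * L.o (W.place L x hx).X := by
  obtain ⟨c0, hc0, i0, h0⟩ := W.res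
  obtain ⟨c1, hc1, i1, h1⟩ := W.lc
  obtain ⟨c2, hc2, i2, h2⟩ := W.swap.lc
  change W.P'.leadingCoeff = _ at h2
  refine ⟨i0 - W.P'.natDegree * i1 - W.P.natDegree * i2, fun L x hx => ?_⟩
  have hX : algebraMap k Ω x ≠ 0 := by simpa using hx
  have hsep : (sp x W.P * sp x W.P' * lineP D.q x).Separable := by
    rw [W.sp_id]; exact D.H_sep x hx
  have hs := hsep.of_mul_left.of_mul_left
  have hs' := hsep.of_mul_left.of_mul_right
  have hr : algebraMap k Ω (aeval x (resultant W.P W.P')) =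
      algebraMap k Ω (sp x W.P).leadingCoeff ^ W.P'.natDegree *
        ∏ y ∈ rts Ω (sp x W.P), (algebraMap k Ω (sp x W.P').leadingCoeff * ∏ z ∈ rts Ω (sp x W.P'), (y - z)) := by
    have e1 : algebraMap k Ω (aeval x (resultant W.P W.P')) =
        resultant ((sp x W.P).map (algebraMap k Ω)) ((sp x W.P').map (algebraMap k Ω))
          ((sp x W.P).map (algebraMap k Ω)).natDegree W.P'.natDegree := by
      rw [natDegree_map, resultant_map_map, W.sp_deg hx]
      unfold sp
      rw [resultant_map_map]
      rfl
    rw [e1, resultant_eq_prod_eval _ _ _ (by rw [natDegree_map, W.sp_deg' hx]) (IsAlgClosed.splits _),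
      ← rts_val hs, leadingCoeff_map]
    congr 1
    rw [Finset.prod]
    congr 1
    refine Multiset.map_congr rfl fun y _ => ?_
    rw [← prod_rts hs', eval_map_algebraMap]
  have hne1 : algebraMap k Ω (sp x W.P).leadingCoeff ≠ 0 := by simpa using W.sp_ne hx
  have hne2 : algebraMap k Ω (sp x W.P').leadingCoeff ≠ 0 := by
    have : sp x W.P' ≠ 0 := W.swap.sp_ne hx
    simpa using this
  have hyz : ∀ y ∈ rts Ω (sp x W.P), ∀ z ∈ rts Ω (sp x W.P'), y - z ≠ 0 := by
    intro y hy z hz h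
    rw [sub_eq_zero] at h
    subst h
    exact (W.place L x hx).dSS' y hy hz
  have hin : ∀ y ∈ rts Ω (sp x W.P), ∏ z ∈ rts Ω (sp x W.P'), (y - z) ≠ 0 :=
    fun y hy => Finset.prod_ne_zero_iff.2 (hyz y hy)
  have hl : (sp x W.P).leadingCoeff = aeval x (C c1 * X ^ i1 : K[X]) := by rw [W.sp_lc hx, h1]
  have hl' : (sp x W.P').leadingCoeff = aeval x (C c2 * X ^ i2 : K[X]) := by
    rw [← h2]; exact W.swap.sp_lc hx
  have ho := congrArg L.o hr
  rw [h0, o_monomial L x hx c0 hc0, L.o_mul (pow_ne_zero _ hne1)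
    (Finset.prod_ne_zero_iff.2 fun y hy => mul_ne_zero hne2 (hin y hy)), L.o_pow, hl, o_monomial L x hx c1 hc1,
    L.o_prod _ _ (fun y hy => mul_ne_zero hne2 (hin y hy)),
    Finset.sum_congr rfl (fun y hy => by
      rw [L.o_mul hne2 (hin y hy), L.o_prod _ _ (hyz y hy), hl', o_monomial L x hx c2 hc2]),
    Finset.sum_add_distrib, Finset.sum_const, card_rts hs, W.sp_deg hx, nsmul_eq_mul] at ho
  have e2 : ∑ z ∈ (W.place L x hx).S ×ˢ (W.place L x hx).S', L.o (z.1 - z.2) =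
      ∑ y ∈ rts Ω (sp x W.P), ∑ z ∈ rts Ω (sp x W.P'), L.o (y - z) := Finset.sum_product _ _ _
  have e3 : (W.place L x hx).X = algebraMap k Ω x := rfl
  rw [e2, e3]
  linear_combination -ho

end Fac

/-- no balanced factorisation over an algebraically closed field -/
theorem partB {K : Type} [Field K] [IsAlgClosed K] {D : Dat K} (W : Fac D)
    (h1 : W.P.natDegree + W.P'.natDegree ≤ 3 * W.P.natDegree)
    (h2 : W.P.natDegree + W.P'.natDegree ≤ 3 * W.P'.natDegree)
    (hyp : (D.t = 2 ∧ D.m = 1) ∨ (2 ≤ D.m ∧ Nat.gcd D.m D.t + 1 ≤ D.m)) : False := by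
  obtain ⟨L⟩ := exists_LV K
  obtain ⟨N, hN⟩ := W.place_N (k := LaurentSeries K) (Ω := AlgebraicClosure (LaurentSeries K))
  have hx0 : L.T ^ (D.q ^ D.m - 1) ≠ 0 := pow_ne_zero _ L.T_ne
  have hxI : L.T⁻¹ ≠ 0 := inv_ne_zero L.T_ne
  exact partB_aux (W.place L _ hx0) (W.place L _ hxI) rfl rfl _ _ (W.place_card L _ hx0).1 (W.place_card L _ hx0).2
    (W.place_card L _ hxI).1 (W.place_card L _ hxI).2 W.deg h1 h2 N (hN L _ hx0) (hN L _ hxI) hyp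

namespace PartA
open MvPolynomial

/-- two-variable polynomials as iterated univariate polynomials -/
noncomputable def Th (K : Type) [Field K] : MvPolynomial (Fin 2) K →+* Polynomial (Polynomial K) :=
  eval₂Hom (Polynomial.C.comp Polynomial.C) ![Polynomial.C Polynomial.X, Polynomial.X]

theorem Th_inj (K : Type) [Field K] : Function.Injective (Th K) := by
  let Ψ : Polynomial (Polynomial K) →+* MvPolynomial (Fin 2) K :=
    Polynomial.eval₂RingHom (Polynomial.eval₂RingHom C (X 0)) (X 1)
  have h : Ψ.comp (Th K) = RingHom.id _ := by
    refine MvPolynomial.ringHom_ext ?_ ?_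
    · intro r; simp [Ψ, Th]
    · intro i; fin_cases i <;> simp [Ψ, Th]
  intro a b hab
  have := congrArg Ψ hab
  have h' := fun z => RingHom.congr_fun h z
  simp only [RingHom.comp_apply, RingHom.id_apply] at h'
  rwa [h', h'] at this

/-- degree in the second variable -/
noncomputable def d {K : Type} [Field K] (P : MvPolynomial (Fin 2) K) : ℕ := (Th K P).natDegree

section
variable {K : Type} [Field K]

theorem Th_ne {P : MvPolynomial (Fin 2) K} (h : P ≠ 0) : Th K P ≠ 0 := by
  rwa [Ne, map_eq_zero_iff _ (Th_inj K)]

theorem d_mul {P Q : MvPolynomial (Fin 2) K} (hP : P ≠ 0) (hQ : Q ≠ 0) : d (P * Q) = d P + d Q := by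
  unfold d
  rw [map_mul, Polynomial.natDegree_mul (Th_ne hP) (Th_ne hQ)]

theorem d_unit {P : MvPolynomial (Fin 2) K} (hP : IsUnit P) : d P = 0 :=
  Polynomial.natDegree_eq_zero_of_isUnit (hP.map (Th K))

theorem d_map (φ : K ≃+* K) (P : MvPolynomial (Fin 2) K) : d (map (φ : K →+* K) P) = d P := by
  have h : (Th K).comp (map (φ : K →+* K)) =
      (Polynomial.mapRingHom (Polynomial.mapRingHom (φ : K →+* K))).comp (Th K) := by
    refine MvPolynomial.ringHom_ext ?_ ?_
    · intro r; simp [Th]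
    · intro i; fin_cases i <;> simp [Th]
  have h1 : Th K (map (φ : K →+* K) P) = (Th K P).map (Polynomial.mapRingHom (φ : K →+* K)) := RingHom.congr_fun h P
  unfold d
  rw [h1]
  exact Polynomial.natDegree_map_eq_of_injective (Polynomial.map_injective _ φ.injective) _

theorem d_prod {ι : Type*} (s : Finset ι) (g : ι → MvPolynomial (Fin 2) K) (hg : ∀ i ∈ s, g i ≠ 0) (n : ℕ)
    (hn : ∀ i ∈ s, d (g i) = n) : d (∏ i ∈ s, g i) = s.card * n := by
  unfold d
  rw [map_prod, Polynomial.natDegree_prod _ _ (fun i hi => Th_ne (hg i hi))]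
  refine (Finset.sum_congr rfl hn).trans ?_
  rw [Finset.sum_const, smul_eq_mul]

/-- balanced factorisation -/
def Bal (c : MvPolynomial (Fin 2) K) : Prop :=
  ∃ P P' : MvPolynomial (Fin 2) K, P * P' = c ∧ d P + d P' ≤ 3 * d P ∧ d P + d P' ≤ 3 * d P'

end

variable {F : Type} [Field F] [Fintype F]

/-- Frobenius -/
noncomputable def fr (F : Type) [Field F] [Fintype F] : AlgebraicClosure F ≃+* AlgebraicClosure F :=
  (FiniteField.frobeniusAlgEquivOfAlgebraic F (AlgebraicClosure F)).toRingEquiv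

theorem fr_apply (a : AlgebraicClosure F) : fr F a = a ^ Fintype.card F := rfl

theorem fr_base (a : F) : fr F (algebraMap F (AlgebraicClosure F) a) = algebraMap F (AlgebraicClosure F) a := by
  rw [fr_apply, ← map_pow, FiniteField.pow_card]

theorem fr_fix (a : AlgebraicClosure F) (h : fr F a = a) : a ∈ Set.range (algebraMap F (AlgebraicClosure F)) := by
  rw [fr_apply] at h
  have h1 : 1 < Fintype.card F := Fintype.one_lt_card
  have hs : (Polynomial.X ^ Fintype.card F - Polynomial.X : Polynomial F).Splits := by
    rw [Polynomial.splits_iff_card_roots, FiniteField.roots_X_pow_card_sub_X,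
      FiniteField.X_pow_card_sub_X_natDegree_eq _ h1]
    rfl
  exact hs.mem_range_of_isRoot (FiniteField.X_pow_card_sub_X_ne_zero _ h1) (i := algebraMap F (AlgebraicClosure F))
    (x := a) (by simp [h])

/-- Frobenius on coefficients -/
noncomputable def Fr (F : Type) [Field F] [Fintype F] :
    MvPolynomial (Fin 2) (AlgebraicClosure F) ≃+* MvPolynomial (Fin 2) (AlgebraicClosure F) :=
  mapEquiv (Fin 2) (fr F)

theorem Fr_apply (h : MvPolynomial (Fin 2) (AlgebraicClosure F)) :
    Fr F h = map (fr F : AlgebraicClosure F →+* AlgebraicClosure F) h := rfl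

theorem Fr_coeff (h : MvPolynomial (Fin 2) (AlgebraicClosure F)) (m : Fin 2 →₀ ℕ) :
    coeff m (Fr F h) = fr F (coeff m h) := by
  rw [Fr_apply, coeff_map]; rfl

theorem Fr_iter_coeff (h : MvPolynomial (Fin 2) (AlgebraicClosure F)) (m : Fin 2 →₀ ℕ) (n : ℕ) :
    coeff m ((Fr F)^[n] h) = (coeff m h) ^ (Fintype.card F ^ n) := by
  induction n with
  | zero => simp
  | succ n ih => rw [Function.iterate_succ_apply', Fr_coeff, ih, fr_apply, ← pow_mul, pow_succ]

theorem Fr_fix (h : MvPolynomial (Fin 2) (AlgebraicClosure F)) (hh : Fr F h = h) :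
    ∃ g, map (algebraMap F (AlgebraicClosure F)) g = h := by
  have := (mem_range_map_iff_coeffs_subset (f := algebraMap F (AlgebraicClosure F)) (x := h)).2 ?_
  · exact this
  · intro a ha
    rw [Finset.mem_coe, mem_coeffs_iff] at ha
    obtain ⟨m, _, rfl⟩ := ha
    refine fr_fix _ ?_
    rw [← Fr_coeff, hh]

theorem Fr_base (g : MvPolynomial (Fin 2) F) :
    Fr F (map (algebraMap F (AlgebraicClosure F)) g) = map (algebraMap F (AlgebraicClosure F)) g := by
  ext m
  rw [Fr_coeff, coeff_map, fr_base]

theorem Fr_periodic (h : MvPolynomial (Fin 2) (AlgebraicClosure F)) : ∃ n, 0 < n ∧ (Fr F)^[n] h = h := by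
  classical
  let E := IntermediateField.adjoin F (h.coeffs : Set (AlgebraicClosure F))
  haveI : FiniteDimensional F E := IntermediateField.finiteDimensional_adjoin
    (fun x _ => Algebra.IsIntegral.isIntegral x)
  haveI : Finite E := Module.finite_of_finite F
  letI := Fintype.ofFinite E
  refine ⟨Module.finrank F E, Module.finrank_pos, ?_⟩
  ext m
  rw [Fr_iter_coeff, ← Module.card_eq_pow_finrank (K := F) (V := E)]
  by_cases hm : coeff m h = 0
  · rw [hm, zero_pow Fintype.card_ne_zero]
  · have hmem : coeff m h ∈ E := IntermediateField.subset_adjoin _ _ (coeff_mem_coeffs m hm)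
    have := FiniteField.pow_card (⟨_, hmem⟩ : E)
    exact congrArg Subtype.val this

theorem isUnit_map (g : MvPolynomial (Fin 2) F) (h : IsUnit (map (algebraMap F (AlgebraicClosure F)) g)) :
    IsUnit g := by
  rw [MvPolynomial.isUnit_iff] at h ⊢
  simpa [coeff_map] using h

theorem iter_ringHom (n : ℕ) (h : MvPolynomial (Fin 2) (AlgebraicClosure F)) :
    (Fr F)^[n] h = ((Fr F) ^ n) h := by
  induction n with
  | zero => rfl
  | succ n ih => rw [Function.iterate_succ_apply', ih, pow_succ']; rfl

theorem bal_irred (g : MvPolynomial (Fin 2) F) (hg : Irreducible g)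
    (hn : ¬ Irreducible (map (algebraMap F (AlgebraicClosure F)) g)) :
    Bal (map (algebraMap F (AlgebraicClosure F)) g) := by
  classical
  set ι := map (σ := Fin 2) (algebraMap F (AlgebraicClosure F)) with hι
  have hinj : Function.Injective ι := map_injective _ (algebraMap F (AlgebraicClosure F)).injective
  have hg0 : ι g ≠ 0 := by rw [Ne, map_eq_zero_iff _ hinj]; exact hg.ne_zero
  have hgu : ¬ IsUnit (ι g) := fun h => hg.not_isUnit (isUnit_map g h)
  obtain ⟨h₀, hh₀, hd₀⟩ := WfDvdMonoid.exists_irreducible_factor hgu hg0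
  obtain ⟨m, hm⟩ := ne_zero_iff.1 hh₀.ne_zero
  obtain ⟨h, hh, hd, hm1⟩ : ∃ h, Irreducible h ∧ h ∣ ι g ∧ coeff m h = 1 := by
    have hu : IsUnit (C (σ := Fin 2) (coeff m h₀)⁻¹) := (isUnit_iff_ne_zero.2 (inv_ne_zero hm)).map C
    refine ⟨C (coeff m h₀)⁻¹ * h₀, (irreducible_isUnit_mul hu).2 hh₀, ?_, ?_⟩
    · exact (hu.mul_left_dvd).2 hd₀
    · rw [coeff_C_mul, inv_mul_cancel₀ hm]
  obtain ⟨n', hn'0, hn'⟩ := Fr_periodic h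
  set n := Function.minimalPeriod (Fr F) h with hndef
  have hnpos : 0 < n := Function.IsPeriodicPt.minimalPeriod_pos hn'0 hn'
  have hper : (Fr F)^[n] h = h := Function.iterate_minimalPeriod
  let H : ℕ → MvPolynomial (Fin 2) (AlgebraicClosure F) := fun i => (Fr F)^[i] h
  have hHirr : ∀ i, Irreducible (H i) := by
    intro i
    induction i with
    | zero => exact hh
    | succ i ih =>
      have : H (i + 1) = Fr F (H i) := Function.iterate_succ_apply' _ _ _
      rw [this]
      exact (MulEquiv.irreducible_iff (Fr F)).2 ih
  have hHd : ∀ i, H i ∣ ι g := by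
    intro i
    induction i with
    | zero => exact hd
    | succ i ih =>
      have : H (i + 1) = Fr F (H i) := Function.iterate_succ_apply' _ _ _
      rw [this, hι, ← Fr_base g]
      exact map_dvd (Fr F) ih
  have hHm : ∀ i, coeff m (H i) = 1 := by
    intro i
    rw [Fr_iter_coeff, hm1, one_pow]
  have hHdeg : ∀ i, d (H i) = d h := by
    intro i
    induction i with
    | zero => rfl
    | succ i ih =>
      have : H (i + 1) = Fr F (H i) := Function.iterate_succ_apply' _ _ _
      rw [this, Fr_apply, d_map, ih]
  have hass : ∀ i j, Associated (H i) (H j) → H i = H j := by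
    rintro i j ⟨u, hu⟩
    obtain ⟨r, _, hr⟩ := isUnit_iff_eq_C_of_isReduced.1 u.isUnit
    rw [hr] at hu
    have := congrArg (coeff m) hu
    rw [mul_comm, coeff_C_mul, hHm, hHm, mul_one] at this
    rw [this, map_one, mul_one] at hu
    exact hu
  have hND : ∏ i ∈ Finset.range n, H i ∣ ι g := by
    refine Finset.prod_dvd_of_isRelPrime ?_ (fun i _ => hHd i)
    intro i hi j hj hij
    show IsRelPrime (H i) (H j)
    rw [(hHirr i).isRelPrime_iff_not_dvd]
    intro hdv
    have he := hass i j (((hHirr i).dvd_irreducible_iff_associated (hHirr j)).1 hdv)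
    have hi' := Finset.mem_range.1 (Finset.mem_coe.1 hi)
    have hj' := Finset.mem_range.1 (Finset.mem_coe.1 hj)
    exact hij ((Function.iterate_eq_iterate_iff_of_lt_minimalPeriod hi' hj').1 he)
  have hHne : ∀ i, H i ≠ 0 := fun i => (hHirr i).ne_zero
  set N := ∏ i ∈ Finset.range n, H i with hN
  have hNne : N ≠ 0 := Finset.prod_ne_zero_iff.2 fun i _ => hHne i
  have hNfix : Fr F N = N := by
    have h1 : Fr F N = ∏ i ∈ Finset.range n, H (i + 1) := by
      rw [hN, map_prod]
      exact Finset.prod_congr rfl fun i _ => (Function.iterate_succ_apply' _ _ _).symm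
    have h2 := Finset.prod_range_succ H n
    rw [Finset.prod_range_succ'] at h2
    have h3 : H n = H 0 := hper
    rw [h3] at h2
    rw [h1]
    exact mul_right_cancel₀ (hHne 0) h2
  obtain ⟨T, hT⟩ := hND
  have hTfix : Fr F T = T := by
    have := congrArg (Fr F) hT
    rw [map_mul, hNfix, hι, Fr_base, ← hι, hT] at this
    exact (mul_left_cancel₀ hNne this).symm
  obtain ⟨N0, hN0⟩ := Fr_fix N hNfix
  obtain ⟨T0, hT0⟩ := Fr_fix T hTfix
  have hg' : g = N0 * T0 := by
    apply hinj
    rw [map_mul, hι, hN0, hT0, ← hι, hT]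
  have hTu : IsUnit T := by
    rcases hg.isUnit_or_isUnit hg' with hu | hu
    · exfalso
      have hu' : IsUnit N := by rw [← hN0]; exact hu.map _
      have : H 0 ∣ N := Finset.dvd_prod_of_mem _ (Finset.mem_range.2 hnpos)
      exact (hHirr 0).not_isUnit (isUnit_of_dvd_unit this hu')
    · rw [← hT0]; exact hu.map _
  have hn2 : 2 ≤ n := by
    by_contra hlt
    have h1 : n = 1 := by omega
    apply hn
    rw [hT, hN, h1, Finset.prod_range_one]
    exact (irreducible_mul_isUnit hTu).2 (hHirr 0)
  refine ⟨T * ∏ i ∈ Finset.range (n / 2), H i, ∏ i ∈ Finset.Ico (n / 2) n, H i, ?_, ?_⟩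
  · rw [mul_assoc, Finset.prod_range_mul_prod_Ico _ (Nat.div_le_self n 2), hT, mul_comm]
  · rw [d_mul hTu.ne_zero (Finset.prod_ne_zero_iff.2 fun i _ => hHne i), d_unit hTu,
      d_prod _ _ (fun i _ => hHne i) _ (fun i _ => hHdeg i), d_prod _ _ (fun i _ => hHne i) _ (fun i _ => hHdeg i),
      Finset.card_range, Nat.card_Ico, zero_add, ← add_mul, ← mul_assoc, ← mul_assoc]
    constructor
    · exact Nat.mul_le_mul_right _ (by omega)
    · exact Nat.mul_le_mul_right _ (by omega)

theorem main (c : MvPolynomial (Fin 2) F) :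
    (∀ g, Irreducible g → g ∣ c → ¬ Irreducible (map (algebraMap F (AlgebraicClosure F)) g)) →
    Bal (map (algebraMap F (AlgebraicClosure F)) c) := by
  induction c using WfDvdMonoid.induction_on_irreducible with
  | zero => intro _; exact ⟨0, 0, by simp, by simp [d], by simp [d]⟩
  | unit u hu =>
    intro _
    have h1 : d (1 : MvPolynomial (Fin 2) (AlgebraicClosure F)) = 0 := d_unit isUnit_one
    exact ⟨map (algebraMap F (AlgebraicClosure F)) u, 1, mul_one _, by rw [d_unit (hu.map _), h1],
      by rw [d_unit (hu.map _), h1]⟩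
  | mul a i ha hi ih =>
    intro hno
    obtain ⟨P, P', hP, h1, h2⟩ := ih fun g hg hga => hno g hg (hga.mul_left i)
    obtain ⟨Q, Q', hQ, h3, h4⟩ := bal_irred i hi (hno i hi (dvd_mul_right i a))
    have hinj : Function.Injective (map (σ := Fin 2) (algebraMap F (AlgebraicClosure F))) :=
      map_injective _ (algebraMap F (AlgebraicClosure F)).injective
    have hPP : P * P' ≠ 0 := by rw [hP, Ne, map_eq_zero_iff _ hinj]; exact ha
    have hQQ : Q * Q' ≠ 0 := by rw [hQ, Ne, map_eq_zero_iff _ hinj]; exact hi.ne_zero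
    refine ⟨Q * P, Q' * P', by rw [map_mul, ← hP, ← hQ]; ring, ?_, ?_⟩
    · rw [d_mul (left_ne_zero_of_mul hQQ) (left_ne_zero_of_mul hPP),
        d_mul (right_ne_zero_of_mul hQQ) (right_ne_zero_of_mul hPP)]
      omega
    · rw [d_mul (left_ne_zero_of_mul hQQ) (left_ne_zero_of_mul hPP),
        d_mul (right_ne_zero_of_mul hQQ) (right_ne_zero_of_mul hPP)]
      omega

end PartA


/-- Let `q = p^e` be a prime power, `t ≥ 2`, `F = F_{q^r}`, and let
`f(X) = ∑_{i=0}^{M} A_i X^{q^{k_i}} ∈ F[X]` with `0 = k_0 < k_1 < ⋯ < k_M`, all `A_i ≠ 0`,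
`A_M = 1`, `k_i ≠ t` for all `i`, and `k_i ≥ t` for all `i ≥ 2`.  If either `t ∣ k_M` and
`k_M ≥ 3t`, or `t ∤ k_M` and `k_M ≥ 2t − 1`, then the polynomial
`C(X,Y) = (f(X)·Y^{q^t} − f(Y)·X^{q^t})/(X^q·Y − X·Y^q) ∈ F[X,Y]` has an irreducible
factor `g ∈ F[X,Y]` which remains irreducible over an algebraic closure of `F`. -/
theorem stmt_5 (p e : ℕ) [Fact p.Prime] (he : 0 < e) (q : ℕ) (hq : q = p ^ e)
    (r : ℕ) (hr : 1 ≤ r) (t : ℕ) (ht : 2 ≤ t)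
    (F : Type) [Field F] [Fintype F] (hcard : Fintype.card F = q ^ r)
    (M : ℕ) (A : Fin (M + 1) → F) (ks : Fin (M + 1) → ℕ)
    (hks0 : ks 0 = 0) (hmono : StrictMono ks)
    (hA : ∀ i, A i ≠ 0) (hAM : A (Fin.last M) = 1)
    (hkt : ∀ i, ks i ≠ t)
    (hkt2 : ∀ i : Fin (M + 1), 2 ≤ (i : ℕ) → t ≤ ks i)
    (hyp : (t ∣ ks (Fin.last M) ∧ 3 * t ≤ ks (Fin.last M)) ∨
           (¬ t ∣ ks (Fin.last M) ∧ 2 * t - 1 ≤ ks (Fin.last M)))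
    (C : MvPolynomial (Fin 2) F)
    (hC : C * ((MvPolynomial.X 0 : MvPolynomial (Fin 2) F) ^ q * MvPolynomial.X 1 -
            MvPolynomial.X 0 * (MvPolynomial.X 1) ^ q) =
          (∑ i, MvPolynomial.C (A i) * (MvPolynomial.X 0 : MvPolynomial (Fin 2) F) ^ q ^ ks i) *
              (MvPolynomial.X 1) ^ q ^ t -
            (∑ i, MvPolynomial.C (A i) * (MvPolynomial.X 1 : MvPolynomial (Fin 2) F) ^ q ^ ks i) *
              (MvPolynomial.X 0) ^ q ^ t) :
    ∃ g : MvPolynomial (Fin 2) F, Irreducible g ∧ g ∣ C ∧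
      Irreducible (MvPolynomial.map (algebraMap F (AlgebraicClosure F)) g) := by
  classical
  by_contra hcon
  push Not at hcon
  obtain ⟨P, P', hPP, hb1, hb2⟩ := PartA.main C (fun g hg hgC => hcon g hg hgC)
  have hp : p.Prime := Fact.out
  obtain ⟨htk, hexp⟩ := numExp t (ks (Fin.last M)) ht hyp
  obtain ⟨i0, hi0, hi0t, hi0u⟩ : ∃ i0, 0 < i0 ∧ i0 < t ∧ ∀ i, 0 < ks i → ks i < t → ks i = i0 := by
    have hone : ∀ i : Fin (M + 1), 0 < ks i → ks i < t → (i : ℕ) = 1 := by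
      intro i h0 h1
      have h2 : ¬ 2 ≤ (i : ℕ) := fun h => absurd (hkt2 i h) (by omega)
      have h3 : (i : ℕ) ≠ 0 := by
        intro h
        have : i = 0 := Fin.ext h
        rw [this, hks0] at h0
        omega
      omega
    by_cases h : ∃ i, 0 < ks i ∧ ks i < t
    · obtain ⟨i, h0, h1⟩ := h
      refine ⟨ks i, h0, h1, fun i' h0' h1' => ?_⟩
      have : i' = i := Fin.ext ((hone i' h0' h1').trans (hone i h0 h1).symm)
      rw [this]
    · exact ⟨1, by omega, by omega, fun i h0 h1 => absurd ⟨i, h0, h1⟩ h⟩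
  have hchar : CharP (AlgebraicClosure F) p := by
    have h1 : ((Fintype.card F : ℕ) : F) = 0 := Nat.cast_card_eq_zero F
    have h2 : ((p : ℕ) : F) = 0 := by
      rw [hcard, hq, Nat.cast_pow, Nat.cast_pow] at h1
      exact eq_zero_of_pow_eq_zero (eq_zero_of_pow_eq_zero h1)
    have h3 : CharP F p := by
      obtain ⟨p', hp'⟩ := CharP.exists F
      have hd : p' ∣ p := (CharP.cast_eq_zero_iff F p' p).1 h2
      rcases (Nat.dvd_prime hp).1 hd with h | h
      · exact absurd h (CharP.char_ne_one F p')
      · rwa [← h]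
    exact charP_of_injective_algebraMap (algebraMap F (AlgebraicClosure F)).injective p
  let cf : ℕ → AlgebraicClosure F := fun j => ∑ i, if ks i = j then algebraMap F (AlgebraicClosure F) (A i) else 0
  have hcf : ∀ i, cf (ks i) = algebraMap F (AlgebraicClosure F) (A i) := by
    intro i
    have : ∀ i', (ks i' = ks i) = (i' = i) := fun i' => propext hmono.injective.eq_iff
    simp only [cf, this]
    simp
  let D : Dat (AlgebraicClosure F) :=
    { p := p, e := e, q := q, t := t, k := ks (Fin.last M), hp := hp, char := hchar, he := he, hq := hq, ht := ht
      htk := htk, c := cf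
      c0 := by
        have := hcf 0
        rw [hks0] at this
        rw [this]
        simpa using hA 0
      ck := by rw [hcf, hAM, map_one]
      i := i0, hi0 := hi0, hit := hi0t
      hci := by
        intro j h0 h1 h2
        refine Finset.sum_eq_zero fun i _ => if_neg ?_
        rintro rfl
        exact h2 (hi0u i h0 h1) }
  have hsum : ∀ {S : Type} [CommRing S] (φ : AlgebraicClosure F →+* S) (y : S),
      ∑ j ∈ Finset.range (ks (Fin.last M) + 1), φ (cf j) * y ^ (q ^ j) =
        ∑ i, φ (algebraMap F (AlgebraicClosure F) (A i)) * y ^ q ^ ks i := by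
    intro S _ φ y
    simp only [cf, map_sum, Finset.sum_mul]
    rw [Finset.sum_comm]
    refine Finset.sum_congr rfl fun i _ => ?_
    rw [Finset.sum_eq_single (ks i)]
    · rw [if_pos rfl]
    · intro j _ hj
      rw [if_neg (Ne.symm hj), map_zero, zero_mul]
    · intro h
      exact absurd (Finset.mem_range.2 (Nat.lt_succ_of_le (hmono.monotone (Fin.le_last i)))) h
  have hTh := congrArg (fun z => PartA.Th (AlgebraicClosure F) (MvPolynomial.map (algebraMap F (AlgebraicClosure F)) z)) hC
  simp only [map_mul, ← hPP, map_sub, map_pow, map_sum, MvPolynomial.map_X, MvPolynomial.map_C] at hTh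
  have hX0 : PartA.Th (AlgebraicClosure F) (MvPolynomial.X 0) = Polynomial.C Polynomial.X := by simp [PartA.Th]
  have hX1 : PartA.Th (AlgebraicClosure F) (MvPolynomial.X 1) = Polynomial.X := by simp [PartA.Th]
  have hCC : ∀ a, PartA.Th (AlgebraicClosure F) (MvPolynomial.C a) = Polynomial.C (Polynomial.C a) := by
    intro a; simp [PartA.Th]
  simp only [hX0, hX1, hCC] at hTh
  let W : Fac D :=
    { P := PartA.Th _ P
      P' := PartA.Th _ P'
      id := by
        have e1 := hsum (Polynomial.C : AlgebraicClosure F →+* _) Polynomial.X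
        have e2 := hsum (Polynomial.C.comp Polynomial.C : AlgebraicClosure F →+* _) Polynomial.X
        simp only [RingHom.comp_apply] at e2
        unfold lineP Dat.H
        simp only [Polynomial.algebraMap_eq]
        change _ = Polynomial.C (∑ j ∈ Finset.range (ks (Fin.last M) + 1), Polynomial.C (cf j) * Polynomial.X ^ (q ^ j)) *
          Polynomial.X ^ (q ^ t) - (∑ j ∈ Finset.range (ks (Fin.last M) + 1),
            Polynomial.C (Polynomial.C (cf j)) * Polynomial.X ^ (q ^ j)) * Polynomial.C (Polynomial.X ^ (q ^ t))
        rw [e1, e2]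
        simp only [map_sum, map_mul, map_pow]
        exact hTh }
  exact partB W hb1 hb2 hexp
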